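/- arXiv:1704.05381 — 4 statements merged into one kernel-verified Lean document; each statement's English description precedes it below -/
import Mathlib

section
/- For f : bD → ℂ the restriction to bD of a continuously differentiable function on ℂ², let 𝒞f : bD → ℂ denote the boundary value of the Cauchy–Leray integral, i.e. 𝒞f(z) = lim_{ε→0⁺} ∫_{bD} f(w)·Δ(w, z+εN(z))^{−2} dH³(w) (this limit exists uniformly in z ∈ bD). Then for every p ∈ [1,∞] there is no constant A < ∞ such that ‖𝒞f‖_{L^p(bD, H³)} ≤ A·‖f‖_{L^p(bD, H³)} holds for all such f; in particular f ↦ 𝒞f does not extend to a bounded operator on L^p(bD, H³) for any 1 ≤ p ≤ ∞. -/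
open MeasureTheory Complex
open scoped ENNReal

noncomputable section

/-- `ℂ²` with the Euclidean metric. -/
abbrev C2 := EuclideanSpace ℂ (Fin 2)

instance : MeasurableSpace C2 := borel _
instance : BorelSpace C2 := ⟨rfl⟩

/-- The defining function `ρ(z) = |z₂|² + (Re z₁)² + (Im z₁)⁴ − 1`. -/
def rho (z : C2) : ℝ := ‖z 1‖ ^ 2 + (z 0).re ^ 2 + (z 0).im ^ 4 - 1

/-- The boundary `bD = {ρ = 0}`. -/
def bD : Set C2 := {z | rho z = 0}

/-- The Cauchy–Leray denominator
`Δ(w,z) = (u₁ − 2i v₁³)(w₁ − z₁) + conj(w₂)(w₂ − z₂)`. -/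
def Delta (w z : C2) : ℂ :=
  (((w 0).re : ℂ) - 2 * I * ((w 0).im : ℂ) ^ 3) * (w 0 - z 0)
    + (starRingEnd ℂ) (w 1) * (w 1 - z 1)
/-- The real gradient `∇ρ` of `ρ` on `ℝ⁴ ≅ ℂ²`, written as a vector in `ℂ²`:
`∇ρ(z) = (2u₁ + 4v₁³ i, 2z₂)`. -/
def gradRho (z : C2) : C2 :=
  (WithLp.equiv 2 (Fin 2 → ℂ)).symm
    ![(2 * (z 0).re : ℝ) + (4 * (z 0).im ^ 3 : ℝ) * I, 2 * z 1]

/-- The inward unit normal `N(z) = −∇ρ(z)/|∇ρ(z)|`. -/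
def Nvec (z : C2) : C2 := (-‖gradRho z‖⁻¹ : ℝ) • gradRho z
/-- The Cauchy–Leray integral of `f` evaluated at the point `z + εN(z)`. -/
def CL (f : C2 → ℂ) (ε : ℝ) (z : C2) : ℂ :=
  ∫ w in bD, f w / (Delta w (z + ε • Nvec z)) ^ 2 ∂μH[3]

/-- `Cf` is the boundary value of the Cauchy–Leray integral of `f`:
`Cf(z) = lim_{ε→0⁺} ∫_{bD} f(w)·Δ(w, z+εN(z))⁻² dH³(w)`, uniformly in `z ∈ bD`. -/
def IsCLBoundaryValue (f Cf : C2 → ℂ) : Prop :=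
  TendstoUniformlyOn (fun ε z => CL f ε z) Cf (nhdsWithin 0 (Set.Ioi 0)) bD

/-!
*Existence.* Near a boundary point, `bD` is a graph over the hyperplane that forgets one real
coordinate. Along the other real coordinate of the same complex variable the derivative of
`Δ(·, z)` does not vanish, so one integration by parts lowers `Δ⁻²` to `Δ⁻¹`. Convexity of `ρ` gives
`2 Re Δ(w, z) ≥ ρ(w) - ρ(z) + ∑ₖ |wₖ - zₖ| ^ dₖ / 3` in the real coordinates, with
`d = (2, 4, 2, 2)`. Any three of the exponents satisfy `∑ 1 / dₖ > 1`, so by the weighted AM-GM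
inequality `|Δ|⁻¹` is at most a multiple of `∏ |wₖ - zₖ| ^ (-r)` over the three chart coordinates,
with `r < 1`. This majorant is integrable and, after a translation, independent of `z`, so dominated
convergence yields a limit as `z` tends to a boundary point from within `D`; compactness of `bD`
makes the convergence along the normals uniform.

*Unboundedness.* For small `t`, let `f` be a bump on the part of `bD` near `(0, 1)` where
`|u₁| ≲ t⁵`, `|v₁| ≲ t²` and `|v₂ + u₁v₁| ≲ t⁸`, and look at `𝒞f` where `u₁ ≈ t⁴`, `|v₁| ≲ t³` and
`|v₂| ≲ t⁸`. Both regions have measure of order `t¹⁵`. The leading part of `Im Δ` is `v₂ + u₁v₁`, so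
between them `Δ` has size `t⁸` and lies close to the positive real axis. Hence
`|𝒞f| ≳ t¹⁵ · t⁻¹⁶ = t⁻¹`, while the measures of the regions contribute comparable factors to the
two `L^p` norms, for every `p`.
-/

section AreaFormula

open Module Set Filter Topology
open scoped NNReal

theorem hausdorffMeasure_image_le_of_dist_le {X Y Z : Type*} [MetricSpace Y] [MetricSpace Z]
    [MeasurableSpace Y] [BorelSpace Y] [MeasurableSpace Z] [BorelSpace Z]
    {f : X → Y} {g : X → Z} {K : ℝ≥0} {A : Set X}
    (h : ∀ a ∈ A, ∀ b ∈ A, dist (f a) (f b) ≤ K * dist (g a) (g b)) {d : ℝ} (hd : 0 ≤ d) :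
    μH[d] (f '' A) ≤ (K : ℝ≥0∞) ^ d * μH[d] (g '' A) := by
  rcases A.eq_empty_or_nonempty with rfl | ⟨x₀, -⟩
  · simp
  have : Nonempty X := ⟨x₀⟩
  have f_invFunOn : ∀ a ∈ A, f (Function.invFunOn g A (g a)) = f a := by
    intro a ha
    have hab := h _ (Function.invFunOn_mem (f := g) (b := g a) ⟨a, ha, rfl⟩) a ha
    rw [Function.invFunOn_eq (f := g) ⟨a, ha, rfl⟩, dist_self, mul_zero] at hab
    exact dist_le_zero.1 hab
  have image_eq : f '' A = (f ∘ Function.invFunOn g A) '' (g '' A) := by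
    rw [image_image]
    exact image_congr fun a ha => (f_invFunOn a ha).symm
  rw [image_eq]
  refine LipschitzOnWith.hausdorffMeasure_image_le (LipschitzOnWith.of_dist_le_mul ?_) hd
  rintro _ ⟨a, ha, rfl⟩ _ ⟨b, hb, rfl⟩
  simp only [Function.comp_apply, f_invFunOn a ha, f_invFunOn b hb]
  exact h a ha b hb

theorem exists_disjoint_measurableSet_iUnion_eq {X : Type*} [TopologicalSpace X]
    [SecondCountableTopology X] [MeasurableSpace X] [OpensMeasurableSpace X] {A : Set X}
    (hA : MeasurableSet A) (hne : A.Nonempty) {V : X → Set X} (hV : ∀ x ∈ A, V x ∈ 𝓝 x) :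
    ∃ B : ℕ → Set X, (∀ n, MeasurableSet (B n)) ∧ Pairwise (Function.onFun Disjoint B) ∧
      ⋃ n, B n = A ∧ ∀ n, ∃ x ∈ A, B n ⊆ V x := by
  obtain ⟨t, htA, htc, hcov⟩ := TopologicalSpace.countable_cover_nhdsWithin
    (f := fun x => interior (V x))
    (fun x hx => mem_nhdsWithin_of_mem_nhds (interior_mem_nhds.2 (hV x hx)))
  have htne : t.Nonempty := by
    obtain ⟨x, hx⟩ := hne
    obtain ⟨y, hy, -⟩ := mem_iUnion₂.1 (hcov hx)
    exact ⟨y, hy⟩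
  obtain ⟨e, rfl⟩ := htc.exists_eq_range htne
  set W : ℕ → Set X := fun n => interior (V (e n))
  refine ⟨fun n => A ∩ disjointed W n,
    fun n => hA.inter (MeasurableSet.disjointed (fun _ => isOpen_interior.measurableSet) n),
    fun i j hij => (disjoint_disjointed W hij).mono inter_subset_right inter_subset_right, ?_,
    fun n => ⟨e n, htA (mem_range_self n), fun x hx =>
      interior_subset (disjointed_subset W n hx.2)⟩⟩
  rw [← inter_iUnion, iUnion_disjointed, inter_eq_left]
  simpa only [biUnion_range] using hcov

theorem setLIntegral_ofReal_le_and_ge {X : Type*} [MeasurableSpace X] (μ : Measure X) {J : X → ℝ}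
    {c : ℝ} {K : ℝ≥0} {A : Set X} (hA : MeasurableSet A) (hJ : ∀ y ∈ A, J y ≤ K * c)
    (hJ' : ∀ y ∈ A, c ≤ K * J y) :
    ∫⁻ y in A, ENNReal.ofReal (J y) ∂μ ≤ K * (ENNReal.ofReal c * μ A) ∧
      ENNReal.ofReal c * μ A ≤ K * ∫⁻ y in A, ENNReal.ofReal (J y) ∂μ := by
  have ofReal_le : ∀ {s t : ℝ}, s ≤ K * t → ENNReal.ofReal s ≤ K * ENNReal.ofReal t := by
    intro s t hst
    rw [← ENNReal.ofReal_coe_nnreal, ← ENNReal.ofReal_mul K.coe_nonneg]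
    exact ENNReal.ofReal_le_ofReal hst
  constructor
  · rw [← mul_assoc, ← setLIntegral_const]
    exact setLIntegral_mono' hA fun y hy => ofReal_le (hJ y hy)
  · rw [← lintegral_const_mul' _ _ ENNReal.coe_ne_top, ← setLIntegral_const]
    exact setLIntegral_mono' hA fun y hy => ofReal_le (hJ' y hy)

variable {E F : Type*} [NormedAddCommGroup E] [InnerProductSpace ℝ E] [FiniteDimensional ℝ E]
  [NormedAddCommGroup F] [InnerProductSpace ℝ F]

theorem exists_mem_nhds_dist_le_mul_dist_fderiv {Φ : E → F} {L : E →L[ℝ] F} {x : E}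
    (hΦ : HasStrictFDerivAt Φ L x) (hL : Function.Injective L) {K : ℝ≥0} (hK : 1 < K) :
    ∃ V ∈ 𝓝 x, ∀ a ∈ V, ∀ b ∈ V,
      dist (Φ a) (Φ b) ≤ K * dist (L a) (L b) ∧ dist (L a) (L b) ≤ K * dist (Φ a) (Φ b) := by
  obtain ⟨c, hc, hLc⟩ := (L : E →ₗ[ℝ] F).exists_antilipschitzWith (LinearMap.ker_eq_bot.2 hL)
  have hK1 : (1 : ℝ) < K := by exact_mod_cast hK
  have hc0 : (0 : ℝ) < c := by exact_mod_cast hc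
  set δ : ℝ := 1 - (K : ℝ)⁻¹
  have hδ0 : 0 < δ := sub_pos.2 (inv_lt_one_of_one_lt₀ hK1)
  have hev := hΦ.isLittleO.def (c := δ / c) (by positivity)
  rw [nhds_prod_eq, eventually_prod_self_iff'] at hev
  obtain ⟨V, hV, hVΦ⟩ := hev
  refine ⟨V, hV, fun a ha b hb => ?_⟩
  have remainder : ‖Φ a - Φ b - L (a - b)‖ ≤ δ * ‖L (a - b)‖ := by
    refine (hVΦ a ha b hb).trans ?_
    rw [div_mul_eq_mul_div, div_le_iff₀ hc0, mul_assoc, mul_comm _ (c : ℝ)]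
    gcongr
    simpa using hLc.le_mul_dist (a - b) 0
  have hinv : (K : ℝ) * (K : ℝ)⁻¹ = 1 := mul_inv_cancel₀ (by positivity)
  have hLn := norm_nonneg (L (a - b))
  rw [dist_eq_norm, dist_eq_norm, ← map_sub]
  constructor
  · have upper : ‖Φ a - Φ b‖ ≤ (1 + δ) * ‖L (a - b)‖ := by
      linarith [norm_le_norm_add_norm_sub' (Φ a - Φ b) (L (a - b))]
    refine upper.trans (mul_le_mul_of_nonneg_right ?_ hLn)
    nlinarith [sq_nonneg ((K : ℝ) - 1), show 0 < (K : ℝ)⁻¹ by positivity]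
  · have lower : (K : ℝ)⁻¹ * ‖L (a - b)‖ ≤ ‖Φ a - Φ b‖ := by
      linarith [norm_le_norm_add_norm_sub (Φ a - Φ b) (L (a - b))]
    calc ‖L (a - b)‖ = K * ((K : ℝ)⁻¹ * ‖L (a - b)‖) := by rw [← mul_assoc, hinv, one_mul]
      _ ≤ K * ‖Φ a - Φ b‖ := by gcongr

theorem normDet_pos {L : E →ₗ[ℝ] F} (hL : Function.Injective L) : 0 < L.normDet := by
  refine L.normDet_nonneg.lt_of_ne' ?_
  rw [Ne, LinearMap.normDet_eq_zero_iff_ker_ne_bot, not_not]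
  exact LinearMap.ker_eq_bot.2 hL

theorem contDiffAt_normDet {G : Type*} [NormedAddCommGroup G] [NormedSpace ℝ G]
    {L : G → E →L[ℝ] F} {x : G} {n : WithTop ℕ∞} (hL : ContDiffAt ℝ n L x)
    (hinj : Function.Injective (L x)) :
    ContDiffAt ℝ n (fun y => (L y : E →ₗ[ℝ] F).normDet) x := by
  set b := stdOrthonormalBasis ℝ E
  have normDet_eq : (fun y => (L y : E →ₗ[ℝ] F).normDet) =
      fun y => √(Matrix.gram ℝ fun i => L y (b i)).det := by
    funext y
    rw [← Real.sqrt_sq (LinearMap.normDet_nonneg _)]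
    exact congrArg _ (LinearMap.normDet_sq_eq_det_gram (L y : E →ₗ[ℝ] F) b)
  have hpos : 0 < √(Matrix.gram ℝ fun i => L x (b i)).det :=
    (congrFun normDet_eq x).symm.trans_gt (normDet_pos hinj)
  rw [normDet_eq]
  refine ContDiffAt.sqrt ?_ (Real.sqrt_pos.1 hpos).ne'
  simp only [Matrix.det_apply', Matrix.gram_apply]
  exact ContDiffAt.sum fun σ _ => contDiffAt_const.mul <| contDiffAt_prod fun i _ =>
    (hL.clm_apply contDiffAt_const).inner ℝ (hL.clm_apply contDiffAt_const)

/-- The factor `√(det (DΦᵀ DΦ))` by which `Φ` distorts Hausdorff measure of the dimension of its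
domain. -/
def normJacobian (Φ : E → F) (x : E) : ℝ := (fderiv ℝ Φ x : E →ₗ[ℝ] F).normDet

theorem normJacobian_nonneg (Φ : E → F) (x : E) : 0 ≤ normJacobian Φ x :=
  LinearMap.normDet_nonneg _

theorem contDiffAt_normJacobian {Φ : E → F} {x : E} {m n : WithTop ℕ∞} (hΦ : ContDiffAt ℝ n Φ x)
    (hmn : m + 1 ≤ n) (hinj : Function.Injective (fderiv ℝ Φ x)) :
    ContDiffAt ℝ m (normJacobian Φ) x :=
  contDiffAt_normDet (hΦ.fderiv_right hmn) hinj

variable [MeasurableSpace E] [BorelSpace E] [MeasurableSpace F] [BorelSpace F]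

/-- `A` has image under `Φ` of Hausdorff measure equal to the integral of the Jacobian, up to a
factor `C` in both directions. -/
def AreaFormulaUpTo (Φ : E → F) (C : ℝ≥0∞) (A : Set E) : Prop :=
  μH[finrank ℝ E] (Φ '' A) ≤ C * ∫⁻ y in A, ENNReal.ofReal (normJacobian Φ y) ∂μH[finrank ℝ E] ∧
    ∫⁻ y in A, ENNReal.ofReal (normJacobian Φ y) ∂μH[finrank ℝ E] ≤ C * μH[finrank ℝ E] (Φ '' A)

theorem exists_mem_nhds_areaFormulaUpTo {Φ : E → F} {x : E} (hΦ : ContDiffAt ℝ 1 Φ x)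
    (hinj : Function.Injective (fderiv ℝ Φ x)) {K : ℝ≥0} (hK : 1 < K) :
    ∃ V ∈ 𝓝 x, ∀ A ⊆ V, MeasurableSet A →
      AreaFormulaUpTo Φ ((K : ℝ≥0∞) ^ (finrank ℝ E + 1)) A := by
  set n := finrank ℝ E with hn
  set J := normJacobian Φ
  set L := fderiv ℝ Φ x
  obtain ⟨V, hVx, hV⟩ := exists_mem_nhds_dist_le_mul_dist_fderiv
    (hΦ.hasStrictFDerivAt one_ne_zero) hinj hK
  have hJx : 0 < J x := normDet_pos hinj
  have hJc : ContinuousAt J x :=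
    (contDiffAt_normJacobian (m := 0) hΦ (by norm_num) hinj).continuousAt
  have hJxK : J x < K * J x := lt_mul_of_one_lt_left hJx (by exact_mod_cast hK)
  have hJle : ∀ᶠ y in 𝓝 x, J y < K * J x := hJc.eventually_lt_const hJxK
  have hJge : ∀ᶠ y in 𝓝 x, J x < K * J y := (hJc.const_mul _).eventually_const_lt hJxK
  refine ⟨V ∩ {y | J y < K * J x ∧ J x < K * J y}, inter_mem hVx (hJle.and hJge),
    fun A hA hAm => ?_⟩
  have measure_image_linear : μH[n] (L '' A) = ENNReal.ofReal (J x) * μH[n] A :=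
    LinearMap.hausdorffMeasure_image (L : E →ₗ[ℝ] F) A
  have image_le : μH[n] (Φ '' A) ≤ K ^ n * (ENNReal.ofReal (J x) * μH[n] A) := by
    rw [← measure_image_linear, ← ENNReal.rpow_natCast]
    exact hausdorffMeasure_image_le_of_dist_le
      (fun a ha b hb => (hV a (hA ha).1 b (hA hb).1).1) n.cast_nonneg
  have le_image : ENNReal.ofReal (J x) * μH[n] A ≤ K ^ n * μH[n] (Φ '' A) := by
    rw [← measure_image_linear, ← ENNReal.rpow_natCast]
    exact hausdorffMeasure_image_le_of_dist_le
      (fun a ha b hb => (hV a (hA ha).1 b (hA hb).1).2) n.cast_nonneg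
  obtain ⟨lintegral_le, le_lintegral⟩ := setLIntegral_ofReal_le_and_ge μH[n] hAm
    (fun y hy => (hA hy).2.1.le) (fun y hy => (hA hy).2.2.le)
  rw [AreaFormulaUpTo, ← hn, pow_succ]
  constructor
  · rw [mul_assoc]; exact image_le.trans (by gcongr)
  · rw [mul_comm _ (K : ℝ≥0∞), mul_assoc]; exact lintegral_le.trans (by gcongr)

variable {Φ : E → F} {U : Set E}

theorem areaFormulaUpTo_pow_of_one_lt (hΦ : ∀ x ∈ U, ContDiffAt ℝ 1 Φ x)
    (hinj' : ∀ x ∈ U, Function.Injective (fderiv ℝ Φ x)) (hinj : InjOn Φ U) {A : Set E}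
    (hA : MeasurableSet A) (hAU : A ⊆ U) {K : ℝ≥0} (hK : 1 < K) :
    AreaFormulaUpTo Φ ((K : ℝ≥0∞) ^ (finrank ℝ E + 1)) A := by
  rcases A.eq_empty_or_nonempty with rfl | hne
  · simp [AreaFormulaUpTo]
  choose! V hVx hV using fun x (hx : x ∈ A) =>
    exists_mem_nhds_areaFormulaUpTo (hΦ x (hAU hx)) (hinj' x (hAU hx)) hK
  obtain ⟨B, hBm, hBd, hBA, hBV⟩ := exists_disjoint_measurableSet_iUnion_eq hA hne hVx
  have hBU : ∀ n, B n ⊆ U := fun n => (subset_iUnion B n).trans (hBA.trans_subset hAU)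
  have hB : ∀ n, AreaFormulaUpTo Φ ((K : ℝ≥0∞) ^ (finrank ℝ E + 1)) (B n) := fun n => by
    obtain ⟨x, hx, hBx⟩ := hBV n
    exact hV x hx _ hBx (hBm n)
  have measure_image : μH[finrank ℝ E] (Φ '' A) = ∑' n, μH[finrank ℝ E] (Φ '' B n) := by
    rw [← hBA, image_iUnion]
    refine measure_iUnion (fun i j hij => (hBd hij).image hinj (hBU i) (hBU j)) fun n => ?_
    exact (hBm n).image_of_continuousOn_injOn
      (fun x hx => (hΦ x (hBU n hx)).continuousAt.continuousWithinAt) (hinj.mono (hBU n))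
  rw [AreaFormulaUpTo, measure_image, ← hBA, lintegral_iUnion hBm hBd, ← ENNReal.tsum_mul_left,
    ← ENNReal.tsum_mul_left]
  exact ⟨ENNReal.tsum_le_tsum fun n => (hB n).1, ENNReal.tsum_le_tsum fun n => (hB n).2⟩

theorem hausdorffMeasure_image_eq_lintegral_normJacobian (hΦ : ∀ x ∈ U, ContDiffAt ℝ 1 Φ x)
    (hinj' : ∀ x ∈ U, Function.Injective (fderiv ℝ Φ x)) (hinj : InjOn Φ U) {A : Set E}
    (hA : MeasurableSet A) (hAU : A ⊆ U) :
    μH[finrank ℝ E] (Φ '' A) =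
      ∫⁻ y in A, ENNReal.ofReal (normJacobian Φ y) ∂μH[finrank ℝ E] := by
  have tendsto_pow_mul : ∀ c : ℝ≥0∞,
      Tendsto (fun K : ℝ≥0 => (K : ℝ≥0∞) ^ (finrank ℝ E + 1) * c) (𝓝[>] 1) (𝓝 c) := by
    intro c
    have hpow : Tendsto (fun K : ℝ≥0 => (K : ℝ≥0∞) ^ (finrank ℝ E + 1)) (𝓝[>] 1) (𝓝 1) := by
      have hcont : Continuous fun K : ℝ≥0 => (K : ℝ≥0∞) ^ (finrank ℝ E + 1) := by fun_prop
      simpa using (hcont.tendsto 1).mono_left nhdsWithin_le_nhds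
    simpa using ENNReal.Tendsto.mul_const hpow (Or.inl one_ne_zero)
  have hUpTo : ∀ᶠ K : ℝ≥0 in 𝓝[>] 1, AreaFormulaUpTo Φ ((K : ℝ≥0∞) ^ (finrank ℝ E + 1)) A :=
    eventually_nhdsWithin_of_forall fun K hK =>
      areaFormulaUpTo_pow_of_one_lt hΦ hinj' hinj hA hAU hK
  exact le_antisymm (ge_of_tendsto (tendsto_pow_mul _) (hUpTo.mono fun _ h => h.1))
    (ge_of_tendsto (tendsto_pow_mul _) (hUpTo.mono fun _ h => h.2))

theorem hausdorffMeasure_restrict_image_eq_map_withDensity (hU : MeasurableSet U)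
    (hΦ : ∀ x ∈ U, ContDiffAt ℝ 1 Φ x) (hinj' : ∀ x ∈ U, Function.Injective (fderiv ℝ Φ x))
    (hinj : InjOn Φ U) :
    (μH[finrank ℝ E] : Measure F).restrict (Φ '' U) =
      (((μH[finrank ℝ E] : Measure E).restrict U).withDensity
        fun x => ENNReal.ofReal (normJacobian Φ x)).map Φ := by
  have hΦc : ContinuousOn Φ U := fun x hx => (hΦ x hx).continuousAt.continuousWithinAt
  have hΦm : AEMeasurable Φ (((μH[finrank ℝ E] : Measure E).restrict U).withDensity
      fun x => ENNReal.ofReal (normJacobian Φ x)) :=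
    (hΦc.aemeasurable hU).mono_ac (withDensity_absolutelyContinuous _ _)
  ext B hB
  have hBU : MeasurableSet (Φ ⁻¹' B ∩ U) := by
    have hemb := hΦc.measurableEmbedding hU hinj
    convert hU.subtype_image (hemb.measurable hB) using 1
    ext y
    simp [and_comm, Set.domRestrict]
  rw [Measure.map_apply_of_aemeasurable hΦm hB, withDensity_apply',
    Measure.restrict_restrict' hU, Measure.restrict_apply hB, ← image_preimage_inter,
    hausdorffMeasure_image_eq_lintegral_normJacobian hΦ hinj' hinj hBU inter_subset_right]

end AreaFormula

section SingularIntegrals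

open Set Filter Topology

theorem integrableOn_abs_rpow_Icc {r : ℝ} (hr : -1 < r) (R : ℝ) :
    IntegrableOn (fun s : ℝ => |s| ^ r) (Icc (-R) R) := by
  have right : IntegrableOn (fun s : ℝ => |s| ^ r) (Ioc 0 R) :=
    (intervalIntegral.intervalIntegrable_rpow' hr).1.congr_fun
      (fun s hs => by simp only [abs_of_pos hs.1]) measurableSet_Ioc
  have left : IntegrableOn (fun s : ℝ => |s| ^ r) (Ico (-R) 0) := by simpa using right.comp_neg
  have zero : IntegrableOn (fun s : ℝ => |s| ^ r) {0} := integrableOn_singleton (by simp) (by simp)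
  refine ((left.union zero).union right).mono_set fun s hs => ?_
  rcases lt_trichotomy s 0 with h | h | h
  · exact Or.inl (Or.inl ⟨hs.1, h⟩)
  · exact Or.inl (Or.inr h)
  · exact Or.inr ⟨h, hs.2⟩

theorem integrableOn_inv_prod_abs_rpow {ι : Type*} [Fintype ι]
    (μ : Measure (EuclideanSpace ℝ ι)) [μ.IsAddHaarMeasure] {s : ℝ} (hs : s < 1) (R : ℝ) :
    IntegrableOn (fun y : EuclideanSpace ℝ ι => (∏ i, |y i| ^ s)⁻¹) {y | ∀ i, |y i| ≤ R} μ := by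
  have h_pi : IntegrableOn (fun y : ι → ℝ => ∏ i, |y i| ^ (-s))
      (univ.pi fun _ => Icc (-R) R) := by
    rw [IntegrableOn, volume_pi, Measure.restrict_pi_pi]
    exact Integrable.fintype_prod fun _ => integrableOn_abs_rpow_Icc (neg_lt_neg hs) R
  have h_volume : IntegrableOn (fun y : EuclideanSpace ℝ ι => (∏ i, |y i| ^ s)⁻¹)
      {y | ∀ i, |y i| ≤ R} := by
    have e := EuclideanSpace.volume_preserving_symm_measurableEquiv_toLp ι
    have preimage_eq : {y : EuclideanSpace ℝ ι | ∀ i, |y i| ≤ R} =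
        (MeasurableEquiv.toLp 2 (ι → ℝ)).symm ⁻¹' univ.pi fun _ => Icc (-R) R := by
      ext y
      simp [abs_le, -pi_univ_Icc]
    simp only [← Finset.prod_inv_distrib, ← Real.rpow_neg (abs_nonneg _), preimage_eq]
    exact (e.integrableOn_comp_preimage (MeasurableEquiv.measurableEmbedding _)).2 h_pi
  rw [Measure.isAddLeftInvariant_eq_smul μ volume, IntegrableOn, Measure.restrict_smul]
  exact h_volume.smul_measure ENNReal.coe_ne_top

theorem ae_forall_apply_ne_zero {ι : Type*} [Finite ι] (μ : Measure (EuclideanSpace ℝ ι))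
    [μ.IsAddHaarMeasure] : ∀ᵐ y ∂μ, ∀ i, y i ≠ 0 := by
  have := Fintype.ofFinite ι
  refine ae_all_iff.2 fun i => ?_
  set S := LinearMap.ker (EuclideanSpace.proj i : EuclideanSpace ℝ ι →L[ℝ] ℝ).toLinearMap with hS
  have hS_top : S ≠ ⊤ := by
    classical
    intro h
    have : EuclideanSpace.single i (1 : ℝ) ∈ S := h ▸ Submodule.mem_top
    simp [hS] at this
  refine ae_iff.2 (measure_mono_null (fun y hy => ?_) (Measure.addHaar_submodule μ S hS_top))
  simpa [hS] using hy

theorem continuous_of_support_subset {X Y : Type*} [TopologicalSpace X] [TopologicalSpace Y]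
    [Zero Y] {h : X → Y} {K : Set X} (hK : IsClosed K) (hs : Function.support h ⊆ K)
    (hc : ∀ x ∈ K, ContinuousAt h x) : Continuous h :=
  continuous_of_tsupport fun x hx => hc x (closure_minimal hs hK hx)

theorem integrable_div_pow_of_tsupport_subset {X : Type*} [TopologicalSpace X] [T2Space X]
    [MeasurableSpace X] [OpensMeasurableSpace X] (μ : Measure X) [IsFiniteMeasureOnCompacts μ]
    {h D : X → ℂ} {K : Set X} (hK : IsCompact K) (hc : Continuous h) (hs : tsupport h ⊆ K)
    (hD : ∀ x ∈ K, ContinuousAt D x) (hD0 : ∀ x ∈ K, D x ≠ 0) (k : ℕ) :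
    Integrable (fun x => h x / D x ^ k) μ := by
  have support_subset : Function.support (fun x => h x / D x ^ k) ⊆ K := by
    simp only [div_eq_mul_inv]
    exact (Function.support_mul_subset_left _ _).trans ((subset_tsupport h).trans hs)
  refine Continuous.integrable_of_hasCompactSupport
    (continuous_of_support_subset hK.isClosed support_subset fun x hx => ?_)
    (HasCompactSupport.of_support_subset_isCompact hK support_subset)
  exact hc.continuousAt.div ((hD x hx).pow k) (pow_ne_zero k (hD0 x hx))

theorem comp_fst_mul_eventuallyEq_zero {X Z : Type*} [TopologicalSpace X] [TopologicalSpace Z]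
    {G : X → ℂ} {x : X} (hx : x ∉ tsupport G) (q : X × Z → ℂ) (z : Z) :
    (fun p : X × Z => G p.1 * q p) =ᶠ[𝓝 (x, z)] 0 := by
  filter_upwards [(notMem_tsupport_iff_eventuallyEq.1 hx).comp_tendsto continuousAt_fst] with p hp
  simp [show G p.1 = 0 from hp]

variable {E : Type*} [NormedAddCommGroup E] [NormedSpace ℝ E]

theorem fderiv_inv_apply {D : E → ℂ} {x : E} (hD : DifferentiableAt ℝ D x) (hx : D x ≠ 0) (e : E) :
    fderiv ℝ (fun y => (D y)⁻¹) x e = -(fderiv ℝ D x e / D x ^ 2) := by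
  have := ((hasFDerivAt_inv' (𝕜 := ℝ) hx).comp x hD.hasFDerivAt).fderiv
  rw [Function.comp_def] at this
  rw [this]
  simp
  field_simp

theorem contDiff_of_forall_mem_tsupport {F : Type*} [NormedAddCommGroup F] [NormedSpace ℝ F]
    {f : E → F} {n : WithTop ℕ∞} (hf : ∀ x ∈ tsupport f, ContDiffAt ℝ n f x) : ContDiff ℝ n f :=
  contDiff_iff_contDiffAt.2 fun x => by
    by_cases hx : x ∈ tsupport f
    · exact hf x hx
    · exact contDiffAt_const.congr_of_eventuallyEq (notMem_tsupport_iff_eventuallyEq.1 hx)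

theorem contDiff_mul_inv_of_tsupport {G q : E → ℂ} {n : WithTop ℕ∞} (hG : ContDiff ℝ n G)
    (hq : ∀ x ∈ tsupport G, ContDiffAt ℝ n q x) (hq0 : ∀ x ∈ tsupport G, q x ≠ 0) :
    ContDiff ℝ n fun x => G x * (q x)⁻¹ :=
  contDiff_of_forall_mem_tsupport fun x hx =>
    have hxG := tsupport_mul_subset_left hx
    hG.contDiffAt.mul ((hq x hxG).inv (hq0 x hxG))

section IntegrationByParts

variable [FiniteDimensional ℝ E] [MeasurableSpace E] [BorelSpace E] (μ : Measure E)
  [μ.IsAddHaarMeasure]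

/- Since `D⁻² = -∂ₑ(D⁻¹) / ∂ₑD`, moving `∂ₑ` onto `G / ∂ₑD` lowers the order of the singularity. -/
theorem integral_div_sq_eq_integral_fderiv_div {G D : E → ℂ} {e : E} (hG : ContDiff ℝ 1 G)
    (hGc : HasCompactSupport G) (hD : ∀ x ∈ tsupport G, ContDiffAt ℝ 2 D x)
    (hD0 : ∀ x ∈ tsupport G, D x ≠ 0) (hq0 : ∀ x ∈ tsupport G, fderiv ℝ D x e ≠ 0) :
    ∫ x, G x / D x ^ 2 ∂μ =
      ∫ x, fderiv ℝ (fun y => G y * (fderiv ℝ D y e)⁻¹) x e / D x ∂μ := by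
  set F : E → ℂ := fun y => G y * (fderiv ℝ D y e)⁻¹
  have hF : ContDiff ℝ 1 F := contDiff_mul_inv_of_tsupport hG
    (fun x hx => ((hD x hx).fderiv_right (by norm_num)).clm_apply contDiffAt_const) hq0
  have hF_tsupport : tsupport F ⊆ tsupport G := tsupport_mul_subset_left
  have hDdiff : ∀ x ∈ tsupport G, DifferentiableAt ℝ D x :=
    fun x hx => (hD x hx).differentiableAt two_ne_zero
  have integrable_div : ∀ {h : E → ℂ} (k : ℕ), Continuous h → tsupport h ⊆ tsupport G →
      Integrable (fun x => h x / D x ^ k) μ := fun k hc hs =>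
    integrable_div_pow_of_tsupport_subset μ hGc hc hs
      (fun x hx => (hDdiff x hx).continuousAt) hD0 k
  have mul_fderiv_inv : ∀ x, F x * fderiv ℝ (fun y => (D y)⁻¹) x e = -(G x / D x ^ 2) := by
    intro x
    by_cases hx : x ∈ tsupport G
    · rw [fderiv_inv_apply (hDdiff x hx) (hD0 x hx)]
      have := hq0 x hx
      simp only [F]
      field_simp
    · simp [F, image_eq_zero_of_notMem_tsupport hx]
  have hF' : Integrable (fun x => fderiv ℝ F x e / D x ^ 1) μ := integrable_div 1
    ((hF.continuous_fderiv one_ne_zero).clm_apply continuous_const)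
    ((tsupport_fderiv_apply_subset ℝ e).trans hF_tsupport)
  have parts := integral_mul_fderiv_eq_neg_fderiv_mul_of_integrable (μ := μ) (v := e) (f := F)
    (g := fun y => (D y)⁻¹) (by simpa only [pow_one, div_eq_mul_inv] using hF')
    (by simpa only [mul_fderiv_inv] using (integrable_div 2 hG.continuous subset_rfl).fun_neg)
    (by simpa only [pow_one, div_eq_mul_inv] using integrable_div 1 hF.continuous hF_tsupport)
    (fun x _ => hF.differentiable one_ne_zero x)
    (fun x hx => (hDdiff x (hF_tsupport hx)).inv (hD0 x (hF_tsupport hx)))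
  simpa only [mul_fderiv_inv, integral_neg, neg_inj, div_eq_mul_inv] using parts

end IntegrationByParts

section Parameter

variable {Z : Type*} [NormedAddCommGroup Z] [NormedSpace ℝ Z]

theorem fderiv_slice_apply {f : E × Z → ℂ} {x : E} {z : Z} (hf : DifferentiableAt ℝ f (x, z))
    (e : E) : fderiv ℝ (fun y => f (y, z)) x e = fderiv ℝ f (x, z) (e, 0) := by
  have hslice : HasFDerivAt (fun y => f (y, z)) _ x :=
    hf.hasFDerivAt.comp x (hasFDerivAt_prodMk_left x z)
  rw [hslice.fderiv]
  rfl

/-- The numerator `∂ₑ(G / ∂ₑD)` produced by integrating `G / D ^ 2` by parts along `e`, where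
`D = D(x, z)` depends on a parameter `z` and `∂ₑ` differentiates in `x` only. -/
def partsNumerator (G : E → ℂ) (D : E × Z → ℂ) (e : E) (p : E × Z) : ℂ :=
  fderiv ℝ (fun q : E × Z => G q.1 * (fderiv ℝ D q (e, 0))⁻¹) p (e, 0)

variable {G : E → ℂ} {D : E × Z → ℂ} {e : E}

theorem partsNumerator_eq_zero {x : E} (hx : x ∉ tsupport G) (z : Z) :
    partsNumerator G D e (x, z) = 0 := by
  rw [partsNumerator, (comp_fst_mul_eventuallyEq_zero hx _ z).fderiv_eq]
  simp

theorem contDiffAt_mul_inv_fderiv (hG : ContDiff ℝ 1 G) {p : E × Z} (hD : ContDiffAt ℝ 2 D p)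
    (hq0 : fderiv ℝ D p (e, 0) ≠ 0) :
    ContDiffAt ℝ 1 (fun q : E × Z => G q.1 * (fderiv ℝ D q (e, 0))⁻¹) p :=
  (hG.contDiffAt.comp p contDiffAt_fst).mul
    (((hD.fderiv_right (by norm_num)).clm_apply contDiffAt_const).inv hq0)

theorem continuousAt_partsNumerator (hG : ContDiff ℝ 1 G) {p : E × Z} (hD : ContDiffAt ℝ 2 D p)
    (hq0 : fderiv ℝ D p (e, 0) ≠ 0) : ContinuousAt (partsNumerator G D e) p :=
  ((contDiffAt_mul_inv_fderiv hG hD hq0).fderiv_right (m := 0) (by norm_num)).continuousAt.clm_apply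
    continuousAt_const

variable [FiniteDimensional ℝ E] [MeasurableSpace E] [BorelSpace E] (μ : Measure E)
  [μ.IsAddHaarMeasure]

theorem integral_div_sq_eq_integral_partsNumerator_div (hG : ContDiff ℝ 1 G)
    (hGc : HasCompactSupport G) {z : Z} (hD : ∀ x ∈ tsupport G, ContDiffAt ℝ 2 D (x, z))
    (hD0 : ∀ x ∈ tsupport G, D (x, z) ≠ 0)
    (hq0 : ∀ x ∈ tsupport G, fderiv ℝ D (x, z) (e, 0) ≠ 0) :
    ∫ x, G x / D (x, z) ^ 2 ∂μ = ∫ x, partsNumerator G D e (x, z) / D (x, z) ∂μ := by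
  have slice : ∀ x ∈ tsupport G,
      fderiv ℝ (fun y => D (y, z)) x e = fderiv ℝ D (x, z) (e, 0) :=
    fun x hx => fderiv_slice_apply ((hD x hx).differentiableAt two_ne_zero) e
  rw [integral_div_sq_eq_integral_fderiv_div μ (D := fun y => D (y, z)) (e := e) hG hGc
    (fun x hx => (hD x hx).comp x (contDiff_prodMk_left z).contDiffAt) hD0
    (fun x hx => (slice x hx).symm ▸ hq0 x hx)]
  have quotient_eq : (fun y => G y * (fderiv ℝ (fun y => D (y, z)) y e)⁻¹) =
      fun y => G y * (fderiv ℝ D (y, z) (e, 0))⁻¹ := by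
    funext y
    by_cases hy : y ∈ tsupport G
    · rw [slice y hy]
    · simp [image_eq_zero_of_notMem_tsupport hy]
  have differentiableAt_quotient : ∀ x, DifferentiableAt ℝ
      (fun q : E × Z => G q.1 * (fderiv ℝ D q (e, 0))⁻¹) (x, z) := by
    intro x
    by_cases hx : x ∈ tsupport G
    · exact (contDiffAt_mul_inv_fderiv hG (hD x hx) (hq0 x hx)).differentiableAt one_ne_zero
    · exact (differentiableAt_const 0).congr_of_eventuallyEq (comp_fst_mul_eventuallyEq_zero hx _ z)
  refine integral_congr_ae (.of_forall fun x => ?_)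
  simp only [quotient_eq, partsNumerator, ← fderiv_slice_apply (differentiableAt_quotient x)]

end Parameter

section MovingSingularity

variable {X Z : Type*} [TopologicalSpace X] [T2Space X] [TopologicalSpace Z] {N D : X × Z → ℂ}
  {K : Set X} {W S : Set Z} {P : Z → X} {z₀ : Z}

theorem continuous_slice_div (hK : IsCompact K) {z : Z} (hN0 : ∀ x ∉ K, N (x, z) = 0)
    (hN : ∀ x ∈ K, ContinuousAt N (x, z)) (hD : ∀ x ∈ K, ContinuousAt D (x, z))
    (hD0 : ∀ x ∈ K, D (x, z) ≠ 0) : Continuous fun x => N (x, z) / D (x, z) := by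
  have hslice : Continuous fun x : X => (x, z) := by fun_prop
  refine continuous_of_support_subset hK.isClosed
    (fun x hx => by_contra fun hxK => hx (by simp [hN0 x hxK])) fun x hx => ?_
  exact ((hN x hx).comp_of_eq hslice.continuousAt rfl).div
    ((hD x hx).comp_of_eq hslice.continuousAt rfl) (hD0 x hx)

theorem continuousAt_curve_div (hK : IsCompact K) (hN0 : ∀ x ∉ K, ∀ z, N (x, z) = 0)
    (hP : Continuous P) (hN : P z₀ ∈ K → ContinuousAt N (P z₀, z₀))
    (hD : P z₀ ∈ K → ContinuousAt D (P z₀, z₀)) (hD0 : P z₀ ∈ K → D (P z₀, z₀) ≠ 0) :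
    ContinuousAt (fun z => N (P z, z) / D (P z, z)) z₀ := by
  have hcurve : Continuous fun z => (P z, z) := by fun_prop
  by_cases hx : P z₀ ∈ K
  · exact ((hN hx).comp_of_eq hcurve.continuousAt rfl).div
      ((hD hx).comp_of_eq hcurve.continuousAt rfl) (hD0 hx)
  · have hKc : ∀ᶠ z in 𝓝 z₀, P z ∈ Kᶜ :=
      hP.continuousAt (hK.isClosed.isOpen_compl.mem_nhds hx)
    refine continuousAt_const.congr (f := fun _ => 0) ?_
    filter_upwards [hKc] with z hz
    rw [hN0 _ hz, zero_div]

variable [AddGroup X] [IsTopologicalAddGroup X] [MeasurableSpace X]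
  [BorelSpace X] (μ : Measure X) [μ.IsAddRightInvariant] [NullSingletonClass μ]
  [FirstCountableTopology Z]

/- Translating by `P z` fixes the singularity at the origin, where one integrable majorant serves
for all `z`. -/
theorem tendsto_integral_div_of_translate_le (hK : IsCompact K) (hW : IsCompact W)
    (hWz : W ∈ 𝓝 z₀) (hN0 : ∀ x ∉ K, ∀ z, N (x, z) = 0)
    (hN : ∀ x ∈ K, ∀ z ∈ W, ContinuousAt N (x, z)) (hD : ∀ x ∈ K, ∀ z ∈ W, ContinuousAt D (x, z))
    (hD0 : ∀ x ∈ K, ∀ z ∈ W ∩ S, D (x, z) ≠ 0) (hD0' : ∀ x ∈ K, x ≠ P z₀ → D (x, z₀) ≠ 0)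
    (hP : Continuous P) {g : X → ℝ} (hg : Integrable g μ)
    (hDg : ∀ᵐ y ∂μ, ∀ z ∈ W ∩ S, y + P z ∈ K → ‖D (y + P z, z)‖⁻¹ ≤ g y) :
    Tendsto (fun z => ∫ x, N (x, z) / D (x, z) ∂μ) (𝓝[S] z₀)
      (𝓝 (∫ x, N (x, z₀) / D (x, z₀) ∂μ)) := by
  have hzW : ∀ᶠ z in 𝓝[S] z₀, z ∈ W ∩ S :=
    inter_mem (mem_nhdsWithin_of_mem_nhds hWz) self_mem_nhdsWithin
  have hz₀ : z₀ ∈ W := mem_of_mem_nhds hWz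
  obtain ⟨M, hM⟩ := (hK.prod hW).exists_bound_of_continuousOn (f := N)
    fun p hp => (hN p.1 hp.1 p.2 hp.2).continuousWithinAt
  have translate : ∀ z, ∫ x, N (x, z) / D (x, z) ∂μ =
      ∫ y, N (y + P z, z) / D (y + P z, z) ∂μ := fun z =>
    (integral_add_right_eq_self (fun x => N (x, z) / D (x, z)) (P z)).symm
  simp only [translate]
  refine tendsto_integral_filter_of_dominated_convergence (fun y => |M| * |g y|) ?_ ?_
    (hg.abs.const_mul _) ?_
  · filter_upwards [hzW] with z hz
    have hcont := continuous_slice_div hK (fun x hx => hN0 x hx z) (fun x hx => hN x hx z hz.1)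
      (fun x hx => hD x hx z hz.1) (fun x hx => hD0 x hx z hz)
    exact (hcont.comp (continuous_id.add continuous_const)).aestronglyMeasurable
  · filter_upwards [hzW] with z hz
    filter_upwards [hDg] with y hy
    by_cases hx : y + P z ∈ K
    · rw [div_eq_mul_inv, norm_mul, norm_inv]
      have hNM : ‖N (y + P z, z)‖ ≤ |M| := (hM (y + P z, z) ⟨hx, hz.1⟩).trans (le_abs_self M)
      gcongr
      exact (hy z hz hx).trans (le_abs_self _)
    · simp only [hN0 _ hx, zero_div, norm_zero]
      positivity
  · filter_upwards [measure_eq_zero_iff_ae_notMem.1 (measure_singleton (μ := μ) (0 : X))] with y hy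
    exact (continuousAt_curve_div hK hN0 (P := fun z => y + P z) (by fun_prop)
      (fun hx => hN _ hx z₀ hz₀) (fun hx => hD _ hx z₀ hz₀)
      fun hx => hD0' _ hx fun h => hy (by simpa using h)).mono_left nhdsWithin_le_nhds

end MovingSingularity

theorem exists_tendsto_integral_div_sq {ι Z : Type*} [Fintype ι] [Nonempty ι]
    [NormedAddCommGroup Z] [NormedSpace ℝ Z] (μ : Measure (EuclideanSpace ℝ ι))
    [μ.IsAddHaarMeasure] {G : EuclideanSpace ℝ ι → ℂ} {D : EuclideanSpace ℝ ι × Z → ℂ}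
    {e : EuclideanSpace ℝ ι} {W S : Set Z} {P : Z → EuclideanSpace ℝ ι} {z₀ : Z}
    (hG : ContDiff ℝ 1 G) (hGc : HasCompactSupport G) (hW : IsCompact W) (hWz : W ∈ 𝓝 z₀)
    (hD : ∀ x ∈ tsupport G, ∀ z ∈ W, ContDiffAt ℝ 2 D (x, z))
    (hq0 : ∀ x ∈ tsupport G, ∀ z ∈ W, fderiv ℝ D (x, z) (e, 0) ≠ 0)
    (hD0 : ∀ x ∈ tsupport G, ∀ z ∈ W ∩ S, D (x, z) ≠ 0)
    (hD0' : ∀ x ∈ tsupport G, x ≠ P z₀ → D (x, z₀) ≠ 0) (hP : Continuous P) {c s : ℝ} (hc : 0 < c)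
    (hs : s < 1) (hDc : ∀ x ∈ tsupport G, ∀ z ∈ W ∩ S,
      c * ∏ i, |x i - P z i| ^ s ≤ ‖D (x, z)‖) :
    ∃ l, Tendsto (fun z => ∫ x, G x / D (x, z) ^ 2 ∂μ) (𝓝[S] z₀) (𝓝 l) := by
  obtain ⟨R, hR⟩ := (hGc.isCompact.prod hW).exists_bound_of_continuousOn
    (f := fun p : EuclideanSpace ℝ ι × Z => p.1 - P p.2) (by fun_prop)
  set box : Set (EuclideanSpace ℝ ι) := {y | ∀ i, |y i| ≤ R}
  have hbox : MeasurableSet box := by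
    simp only [box, ofPred_forall]
    exact .iInter fun i => measurableSet_le (by fun_prop) measurable_const
  have majorant : ∀ᵐ y ∂μ, ∀ z ∈ W ∩ S, y + P z ∈ tsupport G → ‖D (y + P z, z)‖⁻¹ ≤
      c⁻¹ * box.indicator (fun y => (∏ i, |y i| ^ s)⁻¹) y := by
    filter_upwards [ae_forall_apply_ne_zero μ] with y hy z hz hx
    have hy_box : y ∈ box := fun i => by
      simpa using (PiLp.norm_apply_le _ i).trans (hR (y + P z, z) ⟨hx, hz.1⟩)
    have hprod : 0 < ∏ i, |y i| ^ s :=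
      Finset.prod_pos fun i _ => Real.rpow_pos_of_pos (abs_pos.2 (hy i)) _
    rw [indicator_of_mem hy_box, ← mul_inv]
    exact inv_anti₀ (mul_pos hc hprod) (by simpa using hDc _ hx z hz)
  refine ⟨_, (tendsto_integral_div_of_translate_le μ hGc hW hWz
    (fun x hx z => partsNumerator_eq_zero hx z)
    (fun x hx z hz => continuousAt_partsNumerator hG (hD x hx z hz) (hq0 x hx z hz))
    (fun x hx z hz => (hD x hx z hz).continuousAt) hD0 hD0' hP
    (((integrableOn_inv_prod_abs_rpow μ hs R).integrable_indicator hbox).const_mul _)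
    majorant).congr' ?_⟩
  filter_upwards [inter_mem (mem_nhdsWithin_of_mem_nhds hWz) self_mem_nhdsWithin] with z hz
  exact (integral_div_sq_eq_integral_partsNumerator_div μ hG hGc (fun x hx => hD x hx z hz.1)
    (fun x hx => hD0 x hx z hz) fun x hx => hq0 x hx z hz.1).symm

end SingularIntegrals

namespace CauchyLeray

section Coordinates

open Set Filter Topology

/-- The real coordinates `(Re z₁, Im z₁, Re z₂, Im z₂)` of `z ∈ ℂ²`, indexed by `0, 1, 2, 3`. -/
def coord : Fin 4 → C2 →L[ℝ] ℝ :=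
  ![reCLM ∘L (EuclideanSpace.proj 0).restrictScalars ℝ,
    imCLM ∘L (EuclideanSpace.proj 0).restrictScalars ℝ,
    reCLM ∘L (EuclideanSpace.proj 1).restrictScalars ℝ,
    imCLM ∘L (EuclideanSpace.proj 1).restrictScalars ℝ]

/-- The basis of `ℂ²` over `ℝ` dual to `coord`. -/
def coordVec : Fin 4 → C2 := ![!₂[1, 0], !₂[I, 0], !₂[0, 1], !₂[0, I]]

/-- The exponent with which each real coordinate enters `rho`. -/
def degree : Fin 4 → ℕ := ![2, 4, 2, 2]

@[simp] theorem coord_zero_apply (z : C2) : coord 0 z = (z 0).re := rfl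
@[simp] theorem coord_one_apply (z : C2) : coord 1 z = (z 0).im := rfl
@[simp] theorem coord_two_apply (z : C2) : coord 2 z = (z 1).re := rfl
@[simp] theorem coord_three_apply (z : C2) : coord 3 z = (z 1).im := rfl

theorem coord_coordVec (k l : Fin 4) : coord l (coordVec k) = if k = l then 1 else 0 := by
  fin_cases k <;> fin_cases l <;> simp [coordVec]

theorem coord_ext {z w : C2} (h : ∀ k, coord k z = coord k w) : z = w := by
  ext i
  fin_cases i
  · exact Complex.ext (h 0) (h 1)
  · exact Complex.ext (h 2) (h 3)

theorem even_degree (k : Fin 4) : Even (degree k) := by fin_cases k <;> decide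

theorem degree_ne_zero (k : Fin 4) : degree k ≠ 0 := by fin_cases k <;> decide

theorem rho_eq_sum (z : C2) : rho z = ∑ k, coord k z ^ degree k - 1 := by
  simp only [rho, degree, Fin.sum_univ_four, Matrix.cons_val, coord_zero_apply, coord_one_apply,
    coord_two_apply, coord_three_apply, Complex.sq_norm, Complex.normSq_apply]
  ring

theorem norm_sq_eq_sum (z : C2) : ‖z‖ ^ 2 = ∑ k, coord k z ^ 2 := by
  simp only [EuclideanSpace.norm_sq_eq, Fin.sum_univ_two, Fin.sum_univ_four, coord_zero_apply,
    coord_one_apply, coord_two_apply, coord_three_apply, Complex.sq_norm, Complex.normSq_apply]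
  ring

theorem abs_coord_le_norm (k : Fin 4) (z : C2) : |coord k z| ≤ ‖z‖ := by
  refine abs_le_of_sq_le_sq ?_ (norm_nonneg z)
  rw [norm_sq_eq_sum]
  exact Finset.single_le_sum (f := fun k => coord k z ^ 2) (fun k _ => sq_nonneg _)
    (Finset.mem_univ k)

theorem continuous_rho : Continuous rho := by
  unfold rho
  fun_prop

theorem abs_coord_le_one {z : C2} (hz : rho z ≤ 0) (k : Fin 4) : |coord k z| ≤ 1 := by
  have hk : coord k z ^ degree k ≤ 1 := by
    have hsum := Finset.single_le_sum (f := fun k => coord k z ^ degree k)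
      (fun k _ => (even_degree k).pow_nonneg _) (Finset.mem_univ k)
    rw [rho_eq_sum] at hz
    linarith
  rw [← (even_degree k).pow_abs] at hk
  exact (pow_le_one_iff_of_nonneg (abs_nonneg _) (degree_ne_zero k)).1 hk

theorem norm_le_two {z : C2} (hz : rho z ≤ 0) : ‖z‖ ≤ 2 := by
  have hsum : ∑ k, coord k z ^ 2 ≤ ∑ _k : Fin 4, (1 : ℝ) :=
    Finset.sum_le_sum fun k _ => (sq_le_one_iff_abs_le_one _).2 (abs_coord_le_one hz k)
  rw [← norm_sq_eq_sum] at hsum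
  norm_num at hsum
  nlinarith [norm_nonneg z]

theorem isClosed_bD : IsClosed bD := isClosed_eq continuous_rho continuous_const

theorem isCompact_bD : IsCompact bD :=
  Metric.isCompact_of_isClosed_isBounded isClosed_bD <|
    Metric.isBounded_closedBall.subset fun _z hz => mem_closedBall_zero_iff.2 (norm_le_two hz.le)

theorem Delta_re (w z : C2) : (Delta w z).re = coord 0 w * (coord 0 w - coord 0 z)
    + 2 * coord 1 w ^ 3 * (coord 1 w - coord 1 z) + coord 2 w * (coord 2 w - coord 2 z)
    + coord 3 w * (coord 3 w - coord 3 z) := by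
  simp only [Delta, pow_succ, pow_zero, one_mul, add_re, mul_re, mul_im, sub_re, sub_im, ofReal_re,
    ofReal_im, re_ofNat, im_ofNat, I_re, I_im, conj_re, conj_im, coord_zero_apply,
    coord_one_apply, coord_two_apply, coord_three_apply]
  ring

theorem Delta_im (w z : C2) : (Delta w z).im = coord 0 w * (coord 1 w - coord 1 z)
    - 2 * coord 1 w ^ 3 * (coord 0 w - coord 0 z) + coord 2 w * (coord 3 w - coord 3 z)
    - coord 3 w * (coord 2 w - coord 2 z) := by
  simp only [Delta, pow_succ, pow_zero, one_mul, add_im, mul_re, mul_im, sub_re, sub_im, ofReal_re,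
    ofReal_im, re_ofNat, im_ofNat, I_re, I_im, conj_re, conj_im, coord_zero_apply,
    coord_one_apply, coord_two_apply, coord_three_apply]
  ring

theorem two_mul_Delta_re (w z : C2) : 2 * (Delta w z).re = rho w - rho z
    + (coord 0 w - coord 0 z) ^ 2 + (coord 2 w - coord 2 z) ^ 2 + (coord 3 w - coord 3 z) ^ 2
    + (coord 1 w - coord 1 z) ^ 2
      * (3 * coord 1 w ^ 2 + 2 * coord 1 w * coord 1 z + coord 1 z ^ 2) := by
  rw [Delta_re, rho_eq_sum, rho_eq_sum]
  simp only [Fin.sum_univ_four, degree, Matrix.cons_val]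
  ring

theorem rho_sub_rho_add_le_Delta_re (w z : C2) :
    rho w - rho z + ∑ k, (coord k w - coord k z) ^ degree k / 3 ≤ 2 * (Delta w z).re := by
  rw [two_mul_Delta_re]
  simp only [Fin.sum_univ_four, degree, Matrix.cons_val]
  nlinarith [sq_nonneg (coord 0 w - coord 0 z), sq_nonneg (coord 2 w - coord 2 z),
    sq_nonneg (coord 3 w - coord 3 z),
    mul_nonneg (sq_nonneg (coord 1 w - coord 1 z)) (sq_nonneg (2 * coord 1 w + coord 1 z))]

theorem Delta_re_pos {w z : C2} (hw : w ∈ bD) (hz : rho z ≤ 0) (h : rho z < 0 ∨ w ≠ z) :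
    0 < (Delta w z).re := by
  have hlower := rho_sub_rho_add_le_Delta_re w z
  rw [show rho w = 0 from hw] at hlower
  have hnonneg (k) : 0 ≤ (coord k w - coord k z) ^ degree k / 3 :=
    div_nonneg ((even_degree k).pow_nonneg _) three_pos.le
  rcases h with h | h
  · linarith [Finset.sum_nonneg fun k (_ : k ∈ Finset.univ) => hnonneg k]
  · obtain ⟨k, hk⟩ : ∃ k, coord k w ≠ coord k z := by
      by_contra! hc
      exact h (coord_ext hc)
    have hkpos : 0 < (coord k w - coord k z) ^ degree k / 3 :=
      div_pos ((even_degree k).pow_pos (sub_ne_zero.2 hk)) three_pos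
    linarith [Finset.sum_pos' (fun k _ => hnonneg k) ⟨k, Finset.mem_univ k, hkpos⟩]

theorem Delta_ne_zero {w z : C2} (hw : w ∈ bD) (hz : rho z ≤ 0) (h : rho z < 0 ∨ w ≠ z) :
    Delta w z ≠ 0 := fun h0 => by
  simpa [h0] using Delta_re_pos hw hz h

end Coordinates

section Charts

open Set Filter Topology

/-- The parameter space `ℝ³` of the boundary charts. -/
abbrev E3 := EuclideanSpace ℝ (Fin 3)

/-- The projection of `ℂ² ≅ ℝ⁴` to `ℝ³` forgetting the `k`-th real coordinate. -/
def dropCoord (k : Fin 4) : C2 →L[ℝ] E3 :=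
  ((EuclideanSpace.equiv (Fin 3) ℝ).symm : (Fin 3 → ℝ) →L[ℝ] E3) ∘L
    ContinuousLinearMap.pi fun i => coord (k.succAbove i)

/-- The embedding of `ℝ³` in `ℂ² ≅ ℝ⁴` as the hyperplane where the `k`-th coordinate vanishes. -/
def insertZero (k : Fin 4) : E3 →L[ℝ] C2 :=
  ∑ i : Fin 3, (EuclideanSpace.proj i : E3 →L[ℝ] ℝ).smulRight (coordVec (k.succAbove i))

/-- The part of `rho + 1` that does not involve the `k`-th coordinate. -/
def restSum (k : Fin 4) (x : E3) : ℝ := ∑ i, x i ^ degree (k.succAbove i)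

/-- The `k`-th coordinate of the boundary point of sign `s` above `x`, for `s = ±1`. -/
def height (k : Fin 4) (s : ℝ) (x : E3) : ℝ := s * (1 - restSum k x) ^ (degree k : ℝ)⁻¹

/-- The parametrization of `bD` as a graph over the hyperplane `{coord k = 0}`, for `s = ±1`. -/
def chart (k : Fin 4) (s : ℝ) (x : E3) : C2 := insertZero k x + height k s x • coordVec k

/-- The domain of `chart k s`. -/
def chartDomain (k : Fin 4) : Set E3 := {x | restSum k x < 1}

/-- The part of `bD` parametrized by `chart k s`, for `s = ±1`. -/
def chartTarget (k : Fin 4) (s : ℝ) : Set C2 := {w | w ∈ bD ∧ 0 < s * coord k w}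

variable (k : Fin 4) {s : ℝ} {x : E3} {w : C2}

@[simp] theorem dropCoord_apply (z : C2) (i : Fin 3) :
    dropCoord k z i = coord (k.succAbove i) z := rfl

@[simp] theorem insertZero_apply (x : E3) :
    insertZero k x = ∑ i, x i • coordVec (k.succAbove i) := by
  simp [insertZero]

variable (s x) in
@[simp] theorem coord_chart_self : coord k (chart k s x) = height k s x := by
  simp [chart, coord_coordVec]

variable (s x) in
@[simp] theorem coord_chart_succAbove (i : Fin 3) :
    coord (k.succAbove i) (chart k s x) = x i := by
  simp [chart, coord_coordVec]

variable (s x) in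
theorem dropCoord_chart : dropCoord k (chart k s x) = x := by
  ext i
  simp

theorem rho_eq_coord_pow_add (w : C2) :
    rho w = coord k w ^ degree k + restSum k (dropCoord k w) - 1 := by
  rw [rho_eq_sum, Fin.sum_univ_succAbove _ k]
  rfl

theorem contDiff_restSum : ContDiff ℝ 3 (restSum k) := by
  unfold restSum
  fun_prop

theorem isOpen_chartDomain : IsOpen (chartDomain k) :=
  isOpen_lt (contDiff_restSum k).continuous continuous_const

variable (s) in
theorem contDiffAt_height (hx : x ∈ chartDomain k) : ContDiffAt ℝ 3 (height k s) x :=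
  contDiffAt_const.mul <|
    (contDiffAt_const.sub (contDiff_restSum k).contDiffAt).rpow_const_of_ne (sub_pos.2 hx).ne'

variable (s) in
theorem contDiffAt_chart (hx : x ∈ chartDomain k) : ContDiffAt ℝ 3 (chart k s) x :=
  (insertZero k).contDiff.contDiffAt.add ((contDiffAt_height k s hx).smul contDiffAt_const)

variable (s) in
theorem fderiv_chart_apply (hx : x ∈ chartDomain k) (e : E3) :
    fderiv ℝ (chart k s) x e = insertZero k e + fderiv ℝ (height k s) x e • coordVec k := by
  have hheight := ((contDiffAt_height k s hx).differentiableAt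
    (by norm_num)).hasFDerivAt.smul_const (coordVec k)
  have hchart : HasFDerivAt (chart k s) _ x := (insertZero k).hasFDerivAt.add hheight
  rw [hchart.fderiv]
  simp

variable (s) in
theorem injective_fderiv_chart (hx : x ∈ chartDomain k) :
    Function.Injective (fderiv ℝ (chart k s) x) := by
  refine (injective_iff_map_eq_zero _).2 fun e he => ?_
  ext i
  have hi := congrArg (coord (k.succAbove i)) he
  rw [fderiv_chart_apply k s hx] at hi
  simpa [coord_coordVec] using hi

theorem injOn_chart (U : Set E3) : InjOn (chart k s) U :=
  (Function.LeftInverse.injective (dropCoord_chart k s)).injOn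

theorem chart_mem_bD (hs : |s| = 1) (hx : x ∈ chartDomain k) : chart k s x ∈ bD := by
  have hpow : height k s x ^ degree k = 1 - restSum k x := by
    rw [height, mul_pow, ← (even_degree k).pow_abs s, hs, one_pow, one_mul,
      Real.rpow_inv_natCast_pow (sub_pos.2 hx).le (degree_ne_zero k)]
  change rho _ = 0
  rw [rho_eq_coord_pow_add k, coord_chart_self, dropCoord_chart, hpow]
  ring

theorem mul_coord_chart_pos (hs : |s| = 1) (hx : x ∈ chartDomain k) :
    0 < s * coord k (chart k s x) := by
  rw [coord_chart_self, height, ← mul_assoc, ← abs_mul_abs_self, hs, one_mul, one_mul]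
  exact Real.rpow_pos_of_pos (sub_pos.2 hx) _

theorem one_sub_restSum_dropCoord (hw : w ∈ bD) :
    1 - restSum k (dropCoord k w) = coord k w ^ degree k := by
  linarith [rho_eq_coord_pow_add k w, show rho w = 0 from hw]

theorem dropCoord_mem_chartDomain (hw : w ∈ chartTarget k s) :
    dropCoord k w ∈ chartDomain k := by
  have hpos := (even_degree k).pow_pos (right_ne_zero_of_mul hw.2.ne')
  rw [← one_sub_restSum_dropCoord k hw.1] at hpos
  exact sub_pos.1 hpos

theorem chart_dropCoord (hs : |s| = 1) (hw : w ∈ chartTarget k s) :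
    chart k s (dropCoord k w) = w := by
  refine coord_ext fun l => ?_
  rcases Fin.eq_self_or_eq_succAbove k l with rfl | ⟨i, rfl⟩
  · have hpow : coord l w ^ degree l = (s * coord l w) ^ degree l := by
      rw [mul_pow, ← (even_degree l).pow_abs s, hs, one_pow, one_mul]
    rw [coord_chart_self, height, one_sub_restSum_dropCoord l hw.1, hpow,
      Real.pow_rpow_inv_natCast hw.2.le (degree_ne_zero l), ← mul_assoc, ← abs_mul_abs_self, hs,
      one_mul, one_mul]
  · rw [coord_chart_succAbove, dropCoord_apply]

theorem chart_image_chartDomain (hs : |s| = 1) :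
    chart k s '' chartDomain k = chartTarget k s := by
  refine Subset.antisymm ?_ fun w hw => ?_
  · rintro _ ⟨x, hx, rfl⟩
    exact ⟨chart_mem_bD k hs hx, mul_coord_chart_pos k hs hx⟩
  · exact ⟨dropCoord k w, dropCoord_mem_chartDomain k hw, chart_dropCoord k hs hw⟩

theorem setOf_mul_coord_pos_mem_nhds (hw : w ∈ chartTarget k s) :
    {w' | 0 < s * coord k w'} ∈ 𝓝 w :=
  (isOpen_lt continuous_const (by fun_prop)).mem_nhds hw.2

theorem exists_mem_chartTarget (hw : w ∈ bD) : ∃ k, ∃ s : ℝ, |s| = 1 ∧ w ∈ chartTarget k s := by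
  obtain ⟨k, hk⟩ : ∃ k, coord k w ≠ 0 := by
    by_contra! h
    have hw' : rho w = 0 := hw
    simp [rho_eq_sum, h, degree_ne_zero] at hw'
  rcases hk.lt_or_gt with h | h
  · exact ⟨k, -1, by simp, hw, by linarith⟩
  · exact ⟨k, 1, by simp, hw, by linarith⟩

variable (s) in
theorem contDiffAt_normJacobian_chart (hx : x ∈ chartDomain k) :
    ContDiffAt ℝ 1 (normJacobian (chart k s)) x :=
  contDiffAt_normJacobian (contDiffAt_chart k s hx) (by norm_num) (injective_fderiv_chart k s hx)

end Charts

section SurfaceMeasure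

open Set Filter Topology

instance isAddHaarMeasure_hausdorffMeasure_E3 : (μH[3] : Measure E3).IsAddHaarMeasure := by
  simpa using isAddHaarMeasure_hausdorffMeasure (E := E3)

variable (k : Fin 4) {s : ℝ}

theorem hausdorffMeasure_restrict_eq_map_chart (hs : |s| = 1) :
    (μH[3] : Measure C2).restrict (chartTarget k s) =
      (((μH[3] : Measure E3).restrict (chartDomain k)).withDensity
        fun x => ENNReal.ofReal (normJacobian (chart k s) x)).map (chart k s) := by
  have h := hausdorffMeasure_restrict_image_eq_map_withDensity (Φ := chart k s)
    (isOpen_chartDomain k).measurableSet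
    (fun x hx => (contDiffAt_chart k s hx).of_le (by norm_num))
    (fun x hx => injective_fderiv_chart k s hx) (injOn_chart k _)
  rw [chart_image_chartDomain k hs] at h
  simpa using h

theorem setIntegral_eq_setIntegral_chartDomain (hs : |s| = 1) {h : C2 → ℂ}
    (hm : AEStronglyMeasurable h
      ((μH[3] : Measure C2).restrict (chartTarget k s))) :
    ∫ w in chartTarget k s, h w ∂μH[3] =
      ∫ x in chartDomain k, (normJacobian (chart k s) x : ℂ) * h (chart k s x) ∂μH[3] := by
  have hJ : ContinuousOn (normJacobian (chart k s)) (chartDomain k) := fun x hx =>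
    (contDiffAt_normJacobian_chart k s hx).continuousAt.continuousWithinAt
  have hchart : ContinuousOn (chart k s) (chartDomain k) := fun x hx =>
    (contDiffAt_chart k s hx).continuousAt.continuousWithinAt
  have hU := (isOpen_chartDomain k).measurableSet
  rw [hausdorffMeasure_restrict_eq_map_chart k hs] at hm ⊢
  rw [integral_map
      ((hchart.aemeasurable hU).mono_ac (withDensity_absolutelyContinuous _ _)) hm,
    integral_withDensity_eq_integral_toReal_smul₀ (hJ.aemeasurable hU).ennreal_ofReal (by simp)]
  simp [ENNReal.toReal_ofReal (normJacobian_nonneg _ _)]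

theorem exists_mem_nhdsWithin_bD_hausdorffMeasure_lt_top {z : C2} (hz : z ∈ bD) :
    ∃ t ∈ 𝓝[bD] z, (μH[3] : Measure C2) t < ⊤ := by
  obtain ⟨k, s, hs, hzs⟩ := exists_mem_chartTarget hz
  have hx := dropCoord_mem_chartDomain k hzs
  obtain ⟨K, t, ht, hLip⟩ :=
    ((contDiffAt_chart k s hx).of_le (m := 1) (by norm_num)).exists_lipschitzOnWith
  set t' := t ∩ Metric.ball (dropCoord k z) 1
  refine ⟨chart k s '' t', ?_, ?_⟩
  · have hdrop : dropCoord k ⁻¹' t' ∈ 𝓝 z := (dropCoord k).continuous.continuousAt.preimage_mem_nhds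
      (inter_mem ht (Metric.ball_mem_nhds _ one_pos))
    filter_upwards [mem_nhdsWithin_of_mem_nhds hdrop,
      mem_nhdsWithin_of_mem_nhds (setOf_mul_coord_pos_mem_nhds k hzs),
      self_mem_nhdsWithin] with w hwt hws hw
    exact ⟨_, hwt, chart_dropCoord k hs ⟨hw, hws⟩⟩
  · refine ((hLip.mono inter_subset_left).hausdorffMeasure_image_le
      (d := 3) (by norm_num)).trans_lt (ENNReal.mul_lt_top (by simp) ?_)
    exact (measure_mono inter_subset_right).trans_lt measure_ball_lt_top

instance isFiniteMeasure_restrict_bD : IsFiniteMeasure ((μH[3] : Measure C2).restrict bD) :=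
  isFiniteMeasure_restrict.2 (isCompact_bD.measure_lt_top_of_nhdsWithin
    fun _z hz => exists_mem_nhdsWithin_bD_hausdorffMeasure_lt_top hz).ne

end SurfaceMeasure

end CauchyLeray

section ProductBound

theorem prod_abs_rpow_le_sum_pow {ι : Type*} [Fintype ι] [Nonempty ι] {n : ι → ℕ}
    (hn : ∀ i, Even (n i)) (hn0 : ∀ i, n i ≠ 0) (y : ι → ℝ) :
    ∏ i, |y i| ^ (∑ j, (n j : ℝ)⁻¹)⁻¹ ≤ ∑ i, y i ^ n i := by
  set s : ℝ := (∑ j, (n j : ℝ)⁻¹)⁻¹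
  have hninv (i) : 0 < (n i : ℝ)⁻¹ := inv_pos.2 (by exact_mod_cast (hn0 i).bot_lt)
  have hsum : 0 < ∑ j, (n j : ℝ)⁻¹ := Finset.sum_pos (fun i _ => hninv i) Finset.univ_nonempty
  have hweight (i) : 0 ≤ s * (n i : ℝ)⁻¹ := mul_nonneg (inv_pos.2 hsum).le (hninv i).le
  have hweights : ∑ i, s * (n i : ℝ)⁻¹ = 1 := by
    rw [← Finset.mul_sum, inv_mul_cancel₀ hsum.ne']
  have hrpow (i) : |y i| ^ s = (y i ^ n i) ^ (s * (n i : ℝ)⁻¹) := by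
    have hni : (n i : ℝ) ≠ 0 := by exact_mod_cast hn0 i
    rw [← (hn i).pow_abs, ← Real.rpow_natCast, ← Real.rpow_mul (abs_nonneg _)]
    congr 1
    field_simp
  simp only [hrpow]
  refine (Real.geom_mean_le_arith_mean_weighted _ _ _ (fun i _ => hweight i) hweights
    fun i _ => (hn i).pow_nonneg _).trans (Finset.sum_le_sum fun i _ => ?_)
  refine mul_le_of_le_one_left ((hn i).pow_nonneg _) ?_
  rw [← hweights]
  exact Finset.single_le_sum (f := fun i => s * (n i : ℝ)⁻¹) (fun i _ => hweight i)
    (Finset.mem_univ i)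

end ProductBound

namespace CauchyLeray

section Kernel

open Set Filter Topology

/-- The covector `∂ρ(w)`, so that `Δ(w, z) = ⟨∂ρ(w), w - z⟩`. It is `ℂ`-linear, but is kept as an
`ℝ`-linear map because it depends only real-smoothly on `w`. -/
def delRho (w : C2) : C2 →L[ℝ] ℂ :=
  (((w 0).re : ℂ) - 2 * I * ((w 0).im : ℂ) ^ 3) • (EuclideanSpace.proj 0).restrictScalars ℝ
    + (starRingEnd ℂ) (w 1) • (EuclideanSpace.proj 1).restrictScalars ℝ

theorem delRho_apply (w v : C2) : delRho w v =
    (((w 0).re : ℂ) - 2 * I * ((w 0).im : ℂ) ^ 3) * v 0 + (starRingEnd ℂ) (w 1) * v 1 := rfl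

theorem contDiff_delRho {n : WithTop ℕ∞} : ContDiff ℝ n delRho := by
  have hcoord (k) : ContDiff ℝ n fun w : C2 => (coord k w : ℂ) :=
    ofRealCLM.contDiff.comp (coord k).contDiff
  have hconj : ContDiff ℝ n fun w : C2 => (starRingEnd ℂ) (w 1) :=
    conjCLE.contDiff.comp ((EuclideanSpace.proj 1 : C2 →L[ℂ] ℂ).restrictScalars ℝ).contDiff
  exact (((hcoord 0).sub (contDiff_const.mul ((hcoord 1).pow 3))).smul contDiff_const).add
    (hconj.smul contDiff_const)

theorem contDiff_Delta {n : WithTop ℕ∞} : ContDiff ℝ n fun p : C2 × C2 => Delta p.1 p.2 :=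
  (contDiff_delRho.comp contDiff_fst).clm_apply (contDiff_fst.sub contDiff_snd)

theorem continuous_Delta : Continuous fun p : C2 × C2 => Delta p.1 p.2 :=
  (contDiff_Delta (n := 0)).continuous

theorem continuous_Delta_left (z : C2) : Continuous fun w => Delta w z :=
  continuous_Delta.comp (.prodMk_left z)

theorem continuous_Delta_right (w : C2) : Continuous (Delta w) :=
  continuous_Delta.comp (.prodMk_right w)

theorem hasFDerivAt_Delta_left_diag (z : C2) : HasFDerivAt (fun w => Delta w z) (delRho z) z := by
  have h := ((contDiff_delRho (n := 1)).differentiable one_ne_zero z).hasFDerivAt.clm_apply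
    ((hasFDerivAt_id z).sub_const z)
  refine h.congr_fderiv ?_
  ext v
  simp

/-- The domain `D = {ρ < 0}`. -/
def domain : Set C2 := {z | rho z < 0}

/-- The Cauchy–Leray integral `∫_{bD} f(w) Δ(w, z)⁻² dH³(w)`. -/
def leray (f : C2 → ℂ) (z : C2) : ℂ := ∫ w in bD, f w / (Delta w z) ^ 2 ∂μH[3]

theorem aestronglyMeasurable_div_Delta_sq {f : C2 → ℂ} (hf : Continuous f) (z : C2)
    (μ : Measure C2) : AEStronglyMeasurable (fun w => f w / (Delta w z) ^ 2) μ :=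
  (hf.measurable.div ((continuous_Delta_left z).measurable.pow_const 2)).aestronglyMeasurable

end Kernel

section LocalLimit

open Set Filter Topology

/-- The index in the chart `chart k s` of the real coordinate that belongs to the same complex
variable as `coord k`. -/
def partner : Fin 4 → Fin 3 := ![0, 0, 2, 2]

variable (k : Fin 4) {s : ℝ}

theorem delRho_partner_ne_zero {z : C2} (hz : coord k z ≠ 0) (t : ℝ) :
    delRho z (coordVec (k.succAbove (partner k)) + t • coordVec k) ≠ 0 := by
  have hI : (I + t : ℂ) ≠ 0 := fun h => by simpa using congrArg Complex.im h
  have hI' : (1 + t * I : ℂ) ≠ 0 := fun h => by simpa using congrArg Complex.re h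
  set β := ((z 0).re : ℂ) - 2 * I * ((z 0).im : ℂ) ^ 3 with hβ
  rw [delRho_apply, ← hβ]
  fin_cases k
  · have hβ0 : β ≠ 0 := fun h => hz (by simpa [hβ, pow_succ] using congrArg Complex.re h)
    simpa [coordVec, partner, Fin.succAbove] using mul_ne_zero hβ0 hI
  · have hβ0 : β ≠ 0 := fun h => hz (by simpa [hβ, pow_succ] using congrArg Complex.im h)
    simpa [coordVec, partner, Fin.succAbove] using mul_ne_zero hβ0 hI'
  · have hz0 : z 1 ≠ 0 := fun h => hz (congrArg Complex.re h)
    simpa [coordVec, partner, Fin.succAbove] using mul_ne_zero hz0 hI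
  · have hz0 : z 1 ≠ 0 := fun h => hz (congrArg Complex.im h)
    simpa [coordVec, partner, Fin.succAbove] using mul_ne_zero hz0 hI'

variable (s) in
theorem contDiffAt_Delta_chart {x : E3} (hx : x ∈ chartDomain k) (z : C2) :
    ContDiffAt ℝ 2 (fun p : E3 × C2 => Delta (chart k s p.1) p.2) (x, z) := by
  have hchart : ContDiffAt ℝ 2 (fun p : E3 × C2 => chart k s p.1) (x, z) :=
    ContDiffAt.comp (g := chart k s) (x, z)
      ((contDiffAt_chart k s hx).of_le (m := 2) (by norm_num)) contDiffAt_fst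
  exact ContDiffAt.comp (g := fun p : C2 × C2 => Delta p.1 p.2)
    (f := fun p : E3 × C2 => (chart k s p.1, p.2)) (x, z) contDiff_Delta.contDiffAt
    (hchart.prodMk contDiffAt_snd)

theorem fderiv_Delta_chart_partner_ne_zero (hs : |s| = 1) {z : C2} (hz : z ∈ chartTarget k s) :
    fderiv ℝ (fun p : E3 × C2 => Delta (chart k s p.1) p.2) (dropCoord k z, z)
      (EuclideanSpace.single (partner k) 1, 0) ≠ 0 := by
  have hx := dropCoord_mem_chartDomain k hz
  have hchart := ((contDiffAt_chart k s hx).differentiableAt (by norm_num)).hasFDerivAt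
  have hDelta : HasFDerivAt (fun w => Delta w z) (delRho z) (chart k s (dropCoord k z)) := by
    rw [chart_dropCoord k hs hz]
    exact hasFDerivAt_Delta_left_diag z
  have hvec : insertZero k (EuclideanSpace.single (partner k) 1) =
      coordVec (k.succAbove (partner k)) := by
    rw [insertZero_apply, Finset.sum_eq_single (partner k)] <;> simp +contextual
  have hslice : HasFDerivAt (fun x => Delta (chart k s x) z) _ _ := hDelta.comp _ hchart
  rw [← fderiv_slice_apply ((contDiffAt_Delta_chart k s hx z).differentiableAt (by norm_num)),
    hslice.fderiv, ContinuousLinearMap.comp_apply, fderiv_chart_apply k s hx, hvec]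
  exact delRho_partner_ne_zero k (right_ne_zero_of_mul hz.2.ne') _

theorem inv_sum_inv_degree_lt_one : (∑ i, (degree (k.succAbove i) : ℝ)⁻¹)⁻¹ < 1 := by
  refine inv_lt_one_of_one_lt₀ ?_
  fin_cases k <;> simp [Fin.sum_univ_three, degree, Fin.succAbove] <;> norm_num

theorem prod_abs_rpow_le_norm_Delta_chart (hs : |s| = 1) {x : E3} (hx : x ∈ chartDomain k)
    {z : C2} (hz : z ∈ domain) :
    (1 / 6) * ∏ i, |x i - dropCoord k z i| ^ (∑ i, (degree (k.succAbove i) : ℝ)⁻¹)⁻¹ ≤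
      ‖Delta (chart k s x) z‖ := by
  have hlower := rho_sub_rho_add_le_Delta_re (chart k s x) z
  rw [Fin.sum_univ_succAbove _ k, show rho (chart k s x) = 0 from chart_mem_bD k hs hx] at hlower
  have hk := (even_degree k).pow_nonneg (coord k (chart k s x) - coord k z)
  have hprod := prod_abs_rpow_le_sum_pow (fun i => even_degree (k.succAbove i))
    (fun i => degree_ne_zero (k.succAbove i)) fun i => x i - dropCoord k z i
  simp only [coord_chart_succAbove, ← Finset.sum_div, dropCoord_apply] at hlower hprod ⊢
  linarith [Complex.re_le_norm (Delta (chart k s x) z), show rho z < 0 from hz]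

/-- The density `h dH³` on `bD` pulled back to the chart `chart k s`, extended by zero. -/
def pullback (k : Fin 4) (s : ℝ) (h : C2 → ℂ) : E3 → ℂ :=
  (chartDomain k).indicator fun x => (normJacobian (chart k s) x : ℂ) * h (chart k s x)

variable {h : C2 → ℂ}

theorem tsupport_pullback_subset (hs : |s| = 1) :
    tsupport (pullback k s h) ⊆ dropCoord k '' (bD ∩ tsupport h) := by
  have hcompact : IsCompact (dropCoord k '' (bD ∩ tsupport h)) :=
    (isCompact_bD.inter_right (isClosed_tsupport h)).image (dropCoord k).continuous
  refine closure_minimal (fun x hx => ?_) hcompact.isClosed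
  obtain ⟨hxU, hx0⟩ := indicator_apply_ne_zero.1 hx
  exact ⟨chart k s x, ⟨chart_mem_bD k hs hxU, subset_tsupport h (right_ne_zero_of_mul hx0)⟩,
    dropCoord_chart k s x⟩

theorem tsupport_pullback_subset_chartDomain (hs : |s| = 1)
    (hsupp : bD ∩ tsupport h ⊆ chartTarget k s) : tsupport (pullback k s h) ⊆ chartDomain k :=
  (tsupport_pullback_subset k hs).trans <| image_subset_iff.2 fun _w hw =>
    dropCoord_mem_chartDomain k (hsupp hw)

theorem hasCompactSupport_pullback (hs : |s| = 1) : HasCompactSupport (pullback k s h) :=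
  ((isCompact_bD.inter_right (isClosed_tsupport h)).image
    (dropCoord k).continuous).of_isClosed_subset (isClosed_tsupport _)
      (tsupport_pullback_subset k hs)

theorem contDiff_pullback (hs : |s| = 1) (hh : ContDiff ℝ 1 h)
    (hsupp : bD ∩ tsupport h ⊆ chartTarget k s) : ContDiff ℝ 1 (pullback k s h) := by
  refine contDiff_of_forall_mem_tsupport fun x hx => ?_
  have hxU := tsupport_pullback_subset_chartDomain k hs hsupp hx
  have hprod : ContDiffAt ℝ 1
      (fun x => (normJacobian (chart k s) x : ℂ) * h (chart k s x)) x :=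
    (ofRealCLM.contDiff.contDiffAt.comp x (contDiffAt_normJacobian_chart k s hxU)).mul
      (hh.contDiffAt.comp x ((contDiffAt_chart k s hxU).of_le (by norm_num)))
  exact hprod.congr_of_eventuallyEq
    (eqOn_indicator.eventuallyEq_of_mem ((isOpen_chartDomain k).mem_nhds hxU))

theorem leray_eq_integral_pullback (hs : |s| = 1) (hh : Continuous h)
    (hsupp : bD ∩ tsupport h ⊆ chartTarget k s) (z : C2) :
    leray h z = ∫ x, pullback k s h x / (Delta (chart k s x) z) ^ 2 ∂μH[3] := by
  have hrestrict : leray h z = ∫ w in chartTarget k s, h w / (Delta w z) ^ 2 ∂μH[3] := by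
    refine setIntegral_eq_of_subset_of_forall_sdiff_eq_zero isClosed_bD.measurableSet
      (fun w hw => hw.1) fun w hw => ?_
    rw [image_eq_zero_of_notMem_tsupport fun hws => hw.2 (hsupp ⟨hw.1, hws⟩), zero_div]
  rw [hrestrict, setIntegral_eq_setIntegral_chartDomain k hs
    (aestronglyMeasurable_div_Delta_sq hh z _),
    ← integral_indicator (isOpen_chartDomain k).measurableSet]
  congr 1 with x
  by_cases hx : x ∈ chartDomain k <;> simp [pullback, hx, mul_div_assoc]

theorem exists_mem_nhds_forall_tendsto_leray {z₀ : C2} (hz₀ : z₀ ∈ bD) :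
    ∃ V ∈ 𝓝 z₀, ∀ h : C2 → ℂ, ContDiff ℝ 1 h → tsupport h ⊆ V →
      ∃ l, Tendsto (leray h) (𝓝[domain] z₀) (𝓝 l) := by
  obtain ⟨k, s, hs, hzs⟩ := exists_mem_chartTarget hz₀
  have hx₀ := dropCoord_mem_chartDomain k hzs
  have hq : ∀ᶠ p in 𝓝 (dropCoord k z₀, z₀),
      fderiv ℝ (fun p : E3 × C2 => Delta (chart k s p.1) p.2) p
        (EuclideanSpace.single (partner k) 1, 0) ≠ 0 :=
    ((((contDiffAt_Delta_chart k s hx₀ z₀).continuousAt_fderiv (by norm_num)).clm_apply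
      continuousAt_const).eventually_ne (fderiv_Delta_chart_partner_ne_zero k hs hzs))
  obtain ⟨A, hA, B, hB, hAB⟩ := mem_nhds_prod_iff.1 hq
  obtain ⟨W, hWz, hWB, hW⟩ := local_compact_nhds hB
  refine ⟨dropCoord k ⁻¹' A ∩ {w | 0 < s * coord k w},
    inter_mem ((dropCoord k).continuous.continuousAt.preimage_mem_nhds hA)
      (setOf_mul_coord_pos_mem_nhds k hzs), fun h hh hsupp => ?_⟩
  have htarget : bD ∩ tsupport h ⊆ chartTarget k s := fun w hw => ⟨hw.1, (hsupp hw.2).2⟩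
  have hdomain := tsupport_pullback_subset_chartDomain k hs htarget
  have hsuppA : tsupport (pullback k s h) ⊆ A :=
    (tsupport_pullback_subset k hs).trans (image_subset_iff.2 fun w hw => (hsupp hw.2).1)
  simp only [funext (leray_eq_integral_pullback k hs hh.continuous htarget)]
  refine exists_tendsto_integral_div_sq (D := fun p => Delta (chart k s p.1) p.2) _
    (contDiff_pullback k hs hh htarget) (hasCompactSupport_pullback k hs) hW hWz
    (fun x hx z _ => contDiffAt_Delta_chart k s (hdomain hx) z)
    (fun x hx z hz => hAB (mk_mem_prod (hsuppA hx) (hWB hz)))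
    (fun x hx z hz => Delta_ne_zero (chart_mem_bD k hs (hdomain hx)) (le_of_lt hz.2) (.inl hz.2))
    (fun x hx hne => Delta_ne_zero (chart_mem_bD k hs (hdomain hx)) hz₀.le
      (.inr fun heq => hne ((dropCoord_chart k s x).symm.trans (congrArg _ heq))))
    (dropCoord k).continuous (by norm_num) (inv_sum_inv_degree_lt_one k)
    fun x hx z hz => prod_abs_rpow_le_norm_Delta_chart k hs (hdomain hx) hz.2

end LocalLimit

end CauchyLeray

section UniformLimits

open Set Filter Topology

theorem exists_tendstoUniformlyOn_of_forall_tendsto_prod {ι X Y : Type*} [TopologicalSpace X]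
    [UniformSpace Y] [Nonempty Y] {l : Filter ι} [l.NeBot] {F : ι → X → Y} {K : Set X}
    (hK : IsCompact K)
    (hF : ∀ z ∈ K, ∃ y, Tendsto (fun p : ι × X => F p.1 p.2) (l ×ˢ 𝓝[K] z) (𝓝 y)) :
    ∃ G, TendstoUniformlyOn F G l K := by
  choose! G hG using hF
  have hpointwise : ∀ z ∈ K, Tendsto (fun i => F i z) l (𝓝 (G z)) := fun z hz =>
    (hG z hz).comp (tendsto_id.prodMk (tendsto_const_pure.mono_right (pure_le_nhdsWithin hz)))
  have hcont : ∀ z₀ ∈ K, Tendsto G (𝓝[K] z₀) (𝓝 (G z₀)) := by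
    intro z₀ hz₀
    refine (closed_nhds_basis (G z₀)).tendsto_right_iff.2 fun V hV => ?_
    have hFV : ∀ᶠ z in 𝓝[K] z₀, ∀ᶠ i in l, F i z ∈ V :=
      (eventually_swap_iff.1 ((hG z₀ hz₀).eventually hV.1)).curry
    filter_upwards [hFV, self_mem_nhdsWithin] with z hz hzK
    exact hV.2.mem_of_tendsto (hpointwise z hzK) hz
  refine ⟨G, (tendstoLocallyUniformlyOn_iff_tendstoUniformlyOn_of_compact hK).1
    (tendstoLocallyUniformlyOn_iff_forall_tendsto.2 fun z hz => ?_)⟩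
  exact (((hcont z hz).comp tendsto_snd).prodMk_nhds (hG z hz)).mono_right (nhds_le_uniformity _)

end UniformLimits

section GradientStep

theorem sub_mul_pow_pow_lt_pow {a t : ℝ} {d : ℕ} (hd : Even d) (hd0 : d ≠ 0) (ha : a ≠ 0)
    (ha1 : |a| ≤ 1) (ht : 0 < t) (htd : t * d < 1) : (a - t * (d * a ^ (d - 1))) ^ d < a ^ d := by
  obtain ⟨e, rfl⟩ := Nat.exists_eq_add_of_le' (by
    obtain ⟨m, rfl⟩ := hd
    lia : 2 ≤ d)
  have he : Even e := (Nat.even_add.1 hd).2 even_two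
  have hpos : 0 < a ^ e := he.pow_pos ha
  have hle : a ^ e ≤ 1 := he.pow_abs a ▸ pow_le_one₀ (abs_nonneg a) ha1
  have htd0 : 0 < t * ((e + 2 : ℕ) : ℝ) := by positivity
  have hfactor : a - t * ((e + 2 : ℕ) * a ^ (e + 2 - 1))
      = a * (1 - t * (e + 2 : ℕ) * a ^ e) := by
    rw [Nat.add_sub_assoc one_le_two]
    ring
  rw [hfactor, mul_pow]
  exact mul_lt_of_lt_one_right (hd.pow_pos ha)
    (pow_lt_one₀ (by nlinarith) (by nlinarith) hd0)

end GradientStep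

namespace CauchyLeray

open Set Filter Topology

section InwardNormal

theorem coord_gradRho (z : C2) (k : Fin 4) :
    coord k (gradRho z) = degree k * coord k z ^ (degree k - 1) := by
  fin_cases k <;> simp [gradRho, degree, pow_succ]

theorem one_le_norm_gradRho {z : C2} (hz : z ∈ bD) : 1 ≤ ‖gradRho z‖ := by
  have hsum : ∑ k, coord k z ^ degree k - 1 = 0 := (rho_eq_sum z).symm.trans hz
  refine (one_le_sq_iff₀ (norm_nonneg _)).1 ?_
  rw [norm_sq_eq_sum]
  simp only [coord_gradRho, Fin.sum_univ_four, degree, Matrix.cons_val,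
    Nat.cast_ofNat, Nat.reduceSub, pow_one] at hsum ⊢
  nlinarith [sq_nonneg (coord 1 z ^ 2), sq_nonneg (coord 1 z), sq_nonneg (coord 0 z),
    mul_nonneg (sq_nonneg (coord 1 z)) (sq_nonneg (4 * coord 1 z ^ 2 - 1 / 2))]

theorem norm_Nvec_le_one (z : C2) : ‖Nvec z‖ ≤ 1 := by
  rw [Nvec, norm_smul, norm_neg, norm_inv, norm_norm]
  exact inv_mul_le_one

theorem coord_add_smul_Nvec (z : C2) (ε : ℝ) (k : Fin 4) :
    coord k (z + ε • Nvec z)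
      = coord k z - ε * ‖gradRho z‖⁻¹ * (degree k * coord k z ^ (degree k - 1)) := by
  rw [Nvec, map_add, map_smul, map_smul, coord_gradRho, smul_eq_mul, smul_eq_mul]
  ring

theorem add_smul_Nvec_mem_domain {z : C2} (hz : z ∈ bD) {ε : ℝ} (hε : 0 < ε) (hε' : ε < 1 / 4) :
    z + ε • Nvec z ∈ domain := by
  have hrho : rho z = 0 := hz
  have hgrad := one_le_norm_gradRho hz
  have ht : 0 < ε * ‖gradRho z‖⁻¹ := by positivity
  have hdegree : ∀ k, ε * ‖gradRho z‖⁻¹ * degree k < 1 := fun k => by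
    have hinv : ε * ‖gradRho z‖⁻¹ < 1 / 4 :=
      (mul_le_of_le_one_right hε.le (inv_le_one_of_one_le₀ hgrad)).trans_lt hε'
    fin_cases k <;> norm_num [degree] <;> linarith
  have hlt : ∀ k, coord k z ≠ 0 → coord k (z + ε • Nvec z) ^ degree k < coord k z ^ degree k :=
    fun k hk => coord_add_smul_Nvec z ε k ▸ sub_mul_pow_pow_lt_pow (even_degree k)
      (degree_ne_zero k) hk (abs_coord_le_one hrho.le k) ht (hdegree k)
  have hle : ∀ k, coord k (z + ε • Nvec z) ^ degree k ≤ coord k z ^ degree k := fun k => by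
    by_cases hk : coord k z = 0
    · rw [hk, zero_pow (degree_ne_zero k), coord_add_smul_Nvec, hk]
      fin_cases k <;> simp [degree]
    · exact (hlt k hk).le
  obtain ⟨k, hk⟩ : ∃ k, coord k z ≠ 0 := by
    obtain ⟨k, s, -, hk⟩ := exists_mem_chartTarget hz
    exact ⟨k, right_ne_zero_of_mul hk.2.ne'⟩
  change rho _ < 0
  rw [← hrho, rho_eq_sum, rho_eq_sum]
  exact sub_lt_sub_right
    (Finset.sum_lt_sum (fun k _ => hle k) ⟨k, Finset.mem_univ k, hlt k hk⟩) 1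

theorem tendsto_add_smul_Nvec (z₀ : C2) :
    Tendsto (fun p : ℝ × C2 => p.2 + p.1 • Nvec p.2) (𝓝[>] 0 ×ˢ 𝓝[bD] z₀) (𝓝[domain] z₀) := by
  refine tendsto_nhdsWithin_iff.2 ⟨?_, ?_⟩
  · have hsmul : Tendsto (fun p : ℝ × C2 => p.1 • Nvec p.2) (𝓝[>] 0 ×ˢ 𝓝[bD] z₀) (𝓝 0) :=
      (tendsto_fst.mono_right nhdsWithin_le_nhds).zero_smul_isBoundedUnder_le
        (isBoundedUnder_of ⟨1, fun p => norm_Nvec_le_one p.2⟩)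
    simpa using (tendsto_snd.mono_right nhdsWithin_le_nhds).add hsmul
  · filter_upwards [prod_mem_prod (Ioo_mem_nhdsGT (show (0 : ℝ) < 1 / 4 by norm_num))
      self_mem_nhdsWithin] with p hp
    exact add_smul_Nvec_mem_domain hp.2 hp.1.1 hp.1.2

end InwardNormal

section BoundaryValues

variable {f : C2 → ℂ}

theorem exists_norm_div_Delta_sq_le (hf : Continuous f) {C Z : Set C2} (hC : IsCompact C)
    (hZ : IsCompact Z) (hne : ∀ w ∈ C, ∀ z ∈ Z, Delta w z ≠ 0) :
    ∃ M, 0 ≤ M ∧ ∀ w ∈ C, ∀ z ∈ Z, ‖f w / (Delta w z) ^ 2‖ ≤ M := by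
  have hcont : ContinuousOn (fun p : C2 × C2 => f p.1 / (Delta p.1 p.2) ^ 2) (C ×ˢ Z) :=
    (hf.comp continuous_fst).continuousOn.div (continuous_Delta.pow 2).continuousOn
      fun p hp => pow_ne_zero 2 (hne p.1 hp.1 p.2 hp.2)
  obtain ⟨M, hM⟩ := (hC.prod hZ).exists_bound_of_continuousOn hcont
  exact ⟨max M 0, le_max_right _ _,
    fun w hw z hz => (hM (w, z) ⟨hw, hz⟩).trans (le_max_left _ _)⟩

theorem integrable_div_Delta_sq (hf : Continuous f) {z : C2} (hz : rho z ≤ 0)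
    (h : rho z < 0 ∨ z ∉ tsupport f) :
    Integrable (fun w => f w / (Delta w z) ^ 2) ((μH[3] : Measure C2).restrict bD) := by
  obtain ⟨M, hM0, hM⟩ := exists_norm_div_Delta_sq_le hf
    (isCompact_bD.inter_right (isClosed_tsupport f)) (isCompact_singleton (x := z))
    fun w hw y hy => (mem_singleton_iff.1 hy).symm ▸
      Delta_ne_zero hw.1 hz (h.imp_right fun hzs heq => hzs (heq ▸ hw.2))
  refine Integrable.of_bound (aestronglyMeasurable_div_Delta_sq hf z _) M ?_
  filter_upwards [ae_restrict_mem isClosed_bD.measurableSet] with w hw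
  by_cases hws : w ∈ tsupport f
  · exact hM w ⟨hw, hws⟩ z rfl
  · simpa [image_eq_zero_of_notMem_tsupport hws] using hM0

theorem leray_add {g : C2 → ℂ} (hf : Continuous f) (hg : Continuous g) {z : C2}
    (hz : z ∈ domain) : leray (f + g) z = leray f z + leray g z := by
  rw [leray, leray, leray,
    ← integral_add (integrable_div_Delta_sq hf (le_of_lt hz) (.inl hz))
      (integrable_div_Delta_sq hg (le_of_lt hz) (.inl hz))]
  simp only [Pi.add_apply, add_div]

theorem tendsto_leray_of_notMem_tsupport (hf : Continuous f) {z₀ : C2} (hz₀ : z₀ ∈ bD)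
    (hsupp : z₀ ∉ tsupport f) : Tendsto (leray f) (𝓝[domain] z₀) (𝓝 (leray f z₀)) := by
  have hrho : rho z₀ = 0 := hz₀
  obtain ⟨δ, hδ, hball⟩ := Metric.nhds_basis_closedBall.mem_iff.1
    ((isClosed_tsupport f).isOpen_compl.mem_nhds hsupp)
  have hne : ∀ w ∈ bD ∩ tsupport f, ∀ z ∈ Metric.closedBall z₀ δ ∩ {z | rho z ≤ 0},
      Delta w z ≠ 0 := fun w hw z hz =>
    Delta_ne_zero hw.1 hz.2 (.inr fun heq => hball (heq ▸ hz.1) hw.2)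
  obtain ⟨M, hM0, hM⟩ := exists_norm_div_Delta_sq_le hf
    (isCompact_bD.inter_right (isClosed_tsupport f))
    ((isCompact_closedBall z₀ δ).inter_right (isClosed_le continuous_rho continuous_const)) hne
  refine tendsto_integral_filter_of_dominated_convergence (fun _ => M)
    (.of_forall fun z => aestronglyMeasurable_div_Delta_sq hf z _) ?_ (integrable_const _) ?_
  · filter_upwards [mem_nhdsWithin_of_mem_nhds (Metric.closedBall_mem_nhds z₀ hδ),
      self_mem_nhdsWithin] with z hz hzD
    filter_upwards [ae_restrict_mem isClosed_bD.measurableSet] with w hw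
    by_cases hws : w ∈ tsupport f
    · exact hM w ⟨hw, hws⟩ z ⟨hz, le_of_lt (mem_ofPred.1 hzD)⟩
    · simpa [image_eq_zero_of_notMem_tsupport hws] using hM0
  · filter_upwards [ae_restrict_mem isClosed_bD.measurableSet] with w hw
    by_cases hws : w ∈ tsupport f
    · exact tendsto_const_nhds.div
        ((((continuous_Delta_right w).tendsto z₀).mono_left nhdsWithin_le_nhds).pow 2)
        (pow_ne_zero 2 (hne w ⟨hw, hws⟩ z₀ ⟨Metric.mem_closedBall_self hδ.le, hrho.le⟩))
    · simp only [image_eq_zero_of_notMem_tsupport hws, zero_div, tendsto_const_nhds]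

theorem exists_tendsto_leray (hf : ContDiff ℝ 1 f) {z₀ : C2} (hz₀ : z₀ ∈ bD) :
    ∃ l, Tendsto (leray f) (𝓝[domain] z₀) (𝓝 l) := by
  obtain ⟨V, hV, hlocal⟩ := exists_mem_nhds_forall_tendsto_leray hz₀
  obtain ⟨r, hr, hrV⟩ := Metric.nhds_basis_closedBall.mem_iff.1 hV
  let χ : ContDiffBump z₀ := ⟨r / 2, r, half_pos hr, half_lt_self hr⟩
  have hχ : ContDiff ℝ 1 fun w => (χ w : ℂ) := ofRealCLM.contDiff.comp χ.contDiff
  have hnear : ContDiff ℝ 1 fun w => (χ w : ℂ) * f w := hχ.mul hf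
  have hfar : ContDiff ℝ 1 fun w => (1 - (χ w : ℂ)) * f w := (contDiff_const.sub hχ).mul hf
  have hsupp : tsupport (fun w => (χ w : ℂ) * f w) ⊆ V :=
    (closure_mono (Function.support_subset_iff'.2 fun w hw => by
      simp [Function.notMem_support.1 hw])).trans (χ.tsupport_eq.subset.trans hrV)
  obtain ⟨l, hl⟩ := hlocal _ hnear hsupp
  have hl' := tendsto_leray_of_notMem_tsupport hfar.continuous hz₀ <|
    notMem_tsupport_iff_eventuallyEq.2 <| χ.eventuallyEq_one.mono fun w hw => by simp [hw]
  refine ⟨_, (hl.add hl').congr' ?_⟩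
  filter_upwards [self_mem_nhdsWithin] with z hz
  rw [← leray_add hnear.continuous hfar.continuous hz]
  congr 1 with w
  rw [Pi.add_apply]
  ring

theorem exists_isCLBoundaryValue (hf : ContDiff ℝ 1 f) : ∃ Cf, IsCLBoundaryValue f Cf :=
  exists_tendstoUniformlyOn_of_forall_tendsto_prod isCompact_bD fun z₀ hz₀ =>
    (exists_tendsto_leray hf hz₀).imp fun _ hl => hl.comp (tendsto_add_smul_Nvec z₀)

theorem eq_leray_of_isCLBoundaryValue {Cf : C2 → ℂ} (hf : Continuous f)
    (hCf : IsCLBoundaryValue f Cf) {z : C2} (hz : z ∈ bD) (hsupp : z ∉ tsupport f) :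
    Cf z = leray f z := by
  have hnormal : Tendsto (fun ε : ℝ => z + ε • Nvec z) (𝓝[>] 0) (𝓝[domain] z) :=
    (tendsto_add_smul_Nvec z).comp
      (tendsto_id.prodMk (tendsto_const_pure.mono_right (pure_le_nhdsWithin hz)))
  exact tendsto_nhds_unique (hCf.tendsto_at hz)
    ((tendsto_leray_of_notMem_tsupport hf hz hsupp).comp hnormal)

end BoundaryValues

end CauchyLeray

section ProductDifference

theorem abs_mul_sub_mul_le {a b a' b' B m : ℝ} (ha : |a| ≤ B) (hb : |b'| ≤ B)
    (haa : |a - a'| ≤ m) (hbb : |b - b'| ≤ m) : |a * b - a' * b'| ≤ 2 * B * m := by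
  have hB : 0 ≤ B := (abs_nonneg _).trans ha
  have hm : 0 ≤ m := (abs_nonneg _).trans haa
  calc |a * b - a' * b'| = |a * (b - b') + (a - a') * b'| := by ring_nf
    _ ≤ |a| * |b - b'| + |a - a'| * |b'| := by
      simpa only [abs_mul] using abs_add_le (a * (b - b')) ((a - a') * b')
    _ ≤ B * m + m * B := by gcongr
    _ = 2 * B * m := by ring

end ProductDifference

namespace CauchyLeray

open Set Filter Topology

section ShearedCoordinates

variable {l : ℝ} {w w' : C2}

theorem coord_sum_eq_one (hw : w ∈ bD) :
    coord 0 w ^ 2 + coord 1 w ^ 4 + coord 2 w ^ 2 + coord 3 w ^ 2 = 1 := by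
  have hsum : ∑ k, coord k w ^ degree k - 1 = 0 := (rho_eq_sum w).symm.trans hw
  simpa only [Fin.sum_univ_four, degree, Matrix.cons_val, sub_eq_zero] using hsum

/-- The coordinates `(u₁, v₁, v₂ + l u₁ v₁)` of `w`. The test functions live on a box in the
coordinates with `l = 1`, which follows the zero set of the leading part of `Im Δ`; their
transforms are estimated on a box with `l = 0`. -/
def shear (l : ℝ) (w : C2) : Fin 3 → ℝ :=
  ![coord 0 w, coord 1 w, coord 3 w + l * (coord 0 w * coord 1 w)]

theorem continuous_shear (l : ℝ) : Continuous (shear l) := by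
  refine continuous_pi fun i => ?_
  fin_cases i
  · exact (coord 0).continuous
  · exact (coord 1).continuous
  · exact (coord 3).continuous.add
      (continuous_const.mul ((coord 0).continuous.mul (coord 1).continuous))

/-- The part of `bD` near `(0, 1)` on which `shear l` is used as a coordinate system. -/
def patch (l : ℝ) : Set C2 := {w | w ∈ bD ∧ 0 < coord 2 w ∧ ∀ i, |shear l w i| ≤ 1 / 4}

theorem measurableSet_patch (l : ℝ) : MeasurableSet (patch l) := by
  have hshear := continuous_shear l
  have hclosed : IsClosed {w | ∀ i, |shear l w i| ≤ 1 / 4} := by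
    rw [ofPred_forall]
    exact isClosed_iInter fun i => isClosed_le (by fun_prop) continuous_const
  exact isClosed_bD.measurableSet.inter
    ((isOpen_lt continuous_const (coord 2).continuous).measurableSet.inter hclosed.measurableSet)

theorem abs_sub_mul_mul_le_half {a b c : ℝ} (hl : |l| ≤ 1) (ha : |a| ≤ 1 / 4) (hb : |b| ≤ 1 / 4)
    (hc : |c| ≤ 1 / 4) : |c - l * (a * b)| ≤ 1 / 2 := by
  calc |c - l * (a * b)| ≤ |c| + |l| * (|a| * |b|) := by
        simpa only [abs_mul] using abs_sub c (l * (a * b))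
    _ ≤ 1 / 4 + 1 * (1 / 4 * (1 / 4)) := by gcongr
    _ ≤ 1 / 2 := by norm_num

theorem sq_add_pow_four_add_sq_le {a b c : ℝ} (ha : |a| ≤ 1 / 4) (hb : |b| ≤ 1 / 4)
    (hc : |c| ≤ 1 / 2) : a ^ 2 + b ^ 4 + c ^ 2 ≤ 3 / 4 := by
  calc a ^ 2 + b ^ 4 + c ^ 2 = |a| ^ 2 + |b| ^ 4 + |c| ^ 2 := by
        rw [sq_abs, sq_abs, (by decide : Even 4).pow_abs]
    _ ≤ (1 / 4) ^ 2 + (1 / 4) ^ 4 + (1 / 2) ^ 2 := by gcongr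
    _ ≤ 3 / 4 := by norm_num

theorem abs_coord_three_le_of_mem_patch (hl : |l| ≤ 1) (hw : w ∈ patch l) :
    |coord 3 w| ≤ 1 / 2 := by
  simpa [shear] using abs_sub_mul_mul_le_half hl (hw.2.2 0) (hw.2.2 1) (hw.2.2 2)

theorem half_le_coord_two_of_mem_patch (hl : |l| ≤ 1) (hw : w ∈ patch l) :
    1 / 2 ≤ coord 2 w := by
  have hrest := sq_add_pow_four_add_sq_le (hw.2.2 0) (hw.2.2 1)
    (abs_coord_three_le_of_mem_patch hl hw)
  simp only [shear, Matrix.cons_val] at hrest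
  nlinarith [coord_sum_eq_one hw.1, hw.2.1]

theorem exists_mem_patch_shear_eq (hl : |l| ≤ 1) {p : Fin 3 → ℝ} (hp : ∀ i, |p i| ≤ 1 / 4) :
    ∃ w ∈ patch l, shear l w = p := by
  let y := p 2 - l * (p 0 * p 1)
  have hrest : p 0 ^ 2 + p 1 ^ 4 + y ^ 2 ≤ 3 / 4 :=
    sq_add_pow_four_add_sq_le (hp 0) (hp 1) (abs_sub_mul_mul_le_half hl (hp 0) (hp 1) (hp 2))
  have hpos : 0 < 1 - p 0 ^ 2 - p 1 ^ 4 - y ^ 2 := by linarith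
  let w : C2 := !₂[⟨p 0, p 1⟩, ⟨√(1 - p 0 ^ 2 - p 1 ^ 4 - y ^ 2), y⟩]
  have hshear : shear l w = p := by
    ext i
    fin_cases i <;> simp [shear, w, y]
  refine ⟨w, ⟨?_, by simpa [w] using hpos, fun i => hshear ▸ hp i⟩, hshear⟩
  change rho w = 0
  rw [rho_eq_sum]
  simp [Fin.sum_univ_four, degree, w, Real.sq_sqrt hpos.le]
  ring

theorem dist_shear_le (hl : |l| ≤ 1) (hw : w ∈ patch l) (hw' : w' ∈ patch l) :
    dist (shear l w) (shear l w') ≤ 2 * dist w w' := by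
  have hcoord (k) : |coord k w - coord k w'| ≤ dist w w' := by
    simpa only [dist_eq_norm, map_sub] using abs_coord_le_norm k (w - w')
  have hdist : 0 ≤ dist w w' := dist_nonneg
  refine (dist_pi_le_iff (by positivity)).2 fun i => ?_
  rw [Real.dist_eq]
  fin_cases i
  · exact (hcoord 0).trans (by linarith)
  · exact (hcoord 1).trans (by linarith)
  · have hprod := abs_mul_sub_mul_le (hw.2.2 0) (hw'.2.2 1) (hcoord 0) (hcoord 1)
    calc |coord 3 w + l * (coord 0 w * coord 1 w) - (coord 3 w' + l * (coord 0 w' * coord 1 w'))|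
        = |(coord 3 w - coord 3 w') + l * (coord 0 w * coord 1 w - coord 0 w' * coord 1 w')| := by
          ring_nf
      _ ≤ |coord 3 w - coord 3 w'| + |l| * |coord 0 w * coord 1 w - coord 0 w' * coord 1 w'| := by
          simpa only [abs_mul] using abs_add_le (coord 3 w - coord 3 w')
            (l * (coord 0 w * coord 1 w - coord 0 w' * coord 1 w'))
      _ ≤ dist w w' + 1 * (2 * (1 / 4) * dist w w') := by
          gcongr
          exacts [hcoord 3, hprod]
      _ ≤ 2 * dist w w' := by linarith

theorem abs_coord_three_sub_le (hl : |l| ≤ 1) (hw : w ∈ patch l) (hw' : w' ∈ patch l) :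
    |coord 3 w - coord 3 w'| ≤ 2 * dist (shear l w) (shear l w') := by
  have hd := dist_le_pi_dist (shear l w) (shear l w')
  have hprod := abs_mul_sub_mul_le (hw.2.2 0) (hw'.2.2 1) (hd 0) (hd 1)
  have hdist : 0 ≤ dist (shear l w) (shear l w') := dist_nonneg
  calc |coord 3 w - coord 3 w'|
      = |(shear l w 2 - shear l w' 2)
          - l * (shear l w 0 * shear l w 1 - shear l w' 0 * shear l w' 1)| := by
        simp only [shear, Matrix.cons_val]
        ring_nf
    _ ≤ |shear l w 2 - shear l w' 2|
          + |l| * |shear l w 0 * shear l w 1 - shear l w' 0 * shear l w' 1| := by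
        simpa only [abs_mul] using abs_sub (shear l w 2 - shear l w' 2)
          (l * (shear l w 0 * shear l w 1 - shear l w' 0 * shear l w' 1))
    _ ≤ dist (shear l w) (shear l w') + 1 * (2 * (1 / 4) * dist (shear l w) (shear l w')) := by
        gcongr
        exact hd 2
    _ ≤ 2 * dist (shear l w) (shear l w') := by linarith

theorem abs_coord_two_sub_le (hl : |l| ≤ 1) (hw : w ∈ patch l) (hw' : w' ∈ patch l) :
    |coord 2 w - coord 2 w'| ≤ 4 * dist (shear l w) (shear l w') := by
  have hd := dist_le_pi_dist (shear l w) (shear l w')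
  have hd3 := abs_coord_three_sub_le hl hw hw'
  set m := dist (shear l w) (shear l w')
  have hm : 0 ≤ m := dist_nonneg
  have hsq0 : |coord 0 w * coord 0 w - coord 0 w' * coord 0 w'| ≤ 2 * (1 / 4) * m :=
    abs_mul_sub_mul_le (hw.2.2 0) (hw'.2.2 0) (hd 0) (hd 0)
  have hsq1 : |coord 1 w * coord 1 w - coord 1 w' * coord 1 w'| ≤ 2 * (1 / 4) * m :=
    abs_mul_sub_mul_le (hw.2.2 1) (hw'.2.2 1) (hd 1) (hd 1)
  have hsq3 := abs_mul_sub_mul_le (abs_coord_three_le_of_mem_patch hl hw)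
    (abs_coord_three_le_of_mem_patch hl hw') hd3 hd3
  have hle {a : ℝ} (ha : |a| ≤ 1 / 4) : |a * a| ≤ 1 / 4 := by
    rw [abs_mul]
    nlinarith [abs_nonneg a]
  have hfour1 : |coord 1 w * coord 1 w * (coord 1 w * coord 1 w)
      - coord 1 w' * coord 1 w' * (coord 1 w' * coord 1 w')| ≤ 2 * (1 / 4) * (2 * (1 / 4) * m) :=
    abs_mul_sub_mul_le (hle (hw.2.2 1)) (hle (hw'.2.2 1)) hsq1 hsq1
  have hprod : |(coord 2 w - coord 2 w') * (coord 2 w + coord 2 w')| ≤ 4 * m := by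
    rw [show (coord 2 w - coord 2 w') * (coord 2 w + coord 2 w')
      = -(coord 0 w * coord 0 w - coord 0 w' * coord 0 w')
        - (coord 1 w * coord 1 w * (coord 1 w * coord 1 w)
          - coord 1 w' * coord 1 w' * (coord 1 w' * coord 1 w'))
        - (coord 3 w * coord 3 w - coord 3 w' * coord 3 w')
      by linear_combination coord_sum_eq_one hw.1 - coord_sum_eq_one hw'.1]
    rw [abs_le] at *
    constructor <;> linarith
  have hsum : 1 ≤ coord 2 w + coord 2 w' := by
    linarith [half_le_coord_two_of_mem_patch hl hw, half_le_coord_two_of_mem_patch hl hw']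
  rw [abs_mul, abs_of_nonneg (zero_le_one.trans hsum)] at hprod
  exact (le_mul_of_one_le_right (abs_nonneg _) hsum).trans hprod

theorem dist_le_dist_shear (hl : |l| ≤ 1) (hw : w ∈ patch l) (hw' : w' ∈ patch l) :
    dist w w' ≤ 5 * dist (shear l w) (shear l w') := by
  have hd := dist_le_pi_dist (shear l w) (shear l w')
  have hd2 := abs_coord_two_sub_le hl hw hw'
  have hd3 := abs_coord_three_sub_le hl hw hw'
  set m := dist (shear l w) (shear l w')
  refine le_of_sq_le_sq ?_ (mul_nonneg (by norm_num) dist_nonneg)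
  calc dist w w' ^ 2 = |shear l w 0 - shear l w' 0| ^ 2 + |shear l w 1 - shear l w' 1| ^ 2
        + |coord 2 w - coord 2 w'| ^ 2 + |coord 3 w - coord 3 w'| ^ 2 := by
        rw [dist_eq_norm, norm_sq_eq_sum, Fin.sum_univ_four]
        simp only [map_sub, sq_abs, shear, Matrix.cons_val]
    _ ≤ m ^ 2 + m ^ 2 + (4 * m) ^ 2 + (2 * m) ^ 2 := by
        gcongr
        exacts [hd 0, hd 1]
    _ ≤ (5 * m) ^ 2 := by nlinarith [sq_nonneg m]

end ShearedCoordinates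

section Boxes

variable {l : ℝ} {c r : Fin 3 → ℝ}

/-- The points of the patch whose sheared coordinates lie in the box with centre `c` and
half-widths `r`. -/
def box (l : ℝ) (c r : Fin 3 → ℝ) : Set C2 :=
  patch l ∩ shear l ⁻¹' pi univ fun i => Metric.closedBall (c i) (r i)

theorem abs_shear_sub_le_of_mem_box {w : C2} (hw : w ∈ box l c r) (i : Fin 3) :
    |shear l w i - c i| ≤ r i := by
  simpa only [Metric.mem_closedBall, Real.dist_eq] using hw.2 i (mem_univ i)

theorem measurableSet_box (l : ℝ) (c r : Fin 3 → ℝ) : MeasurableSet (box l c r) :=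
  (measurableSet_patch l).inter
    ((isClosed_set_pi fun _ _ => Metric.isClosed_closedBall).preimage
      (continuous_shear l)).measurableSet

theorem shear_image_box (hl : |l| ≤ 1) (hcr : ∀ i, |c i| + r i ≤ 1 / 4) :
    shear l '' box l c r = pi univ fun i => Metric.closedBall (c i) (r i) := by
  refine Subset.antisymm (image_subset_iff.2 fun w hw => hw.2) fun p hp => ?_
  have hp' (i) : |p i| ≤ 1 / 4 := by
    have hi : |p i - c i| ≤ r i := hp i (mem_univ i)
    linarith [abs_sub_abs_le_abs_sub (p i) (c i), hcr i]
  obtain ⟨w, hw, rfl⟩ := exists_mem_patch_shear_eq hl hp'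
  exact ⟨w, ⟨hw, hp⟩, rfl⟩

theorem hausdorffMeasure_pi_closedBall (hr : ∀ i, 0 ≤ r i) :
    μH[3] (pi univ fun i => Metric.closedBall (c i) (r i)) = 8 * ENNReal.ofReal (∏ i, r i) := by
  have hvol : (μH[3] : Measure (Fin 3 → ℝ)) = volume := by
    simpa using hausdorffMeasure_pi_real (ι := Fin 3)
  rw [hvol, volume_pi_pi, ENNReal.ofReal_prod_of_nonneg fun i _ => hr i]
  simp only [Real.volume_closedBall, ENNReal.ofReal_mul zero_le_two, Finset.prod_mul_distrib]
  norm_num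

theorem ofReal_prod_le_hausdorffMeasure_box (hl : |l| ≤ 1) (hr : ∀ i, 0 ≤ r i)
    (hcr : ∀ i, |c i| + r i ≤ 1 / 4) : ENNReal.ofReal (∏ i, r i) ≤ μH[3] (box l c r) := by
  have himage := hausdorffMeasure_image_le_of_dist_le (f := shear l) (g := id) (K := 2)
    (A := box l c r) (fun w hw w' hw' => dist_shear_le hl hw.1 hw'.1) (d := 3) (by norm_num)
  rw [shear_image_box hl hcr, hausdorffMeasure_pi_closedBall hr, image_id] at himage
  norm_num at himage
  exact (ENNReal.mul_le_mul_iff_right (by norm_num) (by norm_num)).1 himage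

theorem hausdorffMeasure_box_le (hl : |l| ≤ 1) (hr : ∀ i, 0 ≤ r i)
    (hcr : ∀ i, |c i| + r i ≤ 1 / 4) :
    μH[3] (box l c r) ≤ 1000 * ENNReal.ofReal (∏ i, r i) := by
  have himage := hausdorffMeasure_image_le_of_dist_le (f := id) (g := shear l) (K := 5)
    (A := box l c r) (fun w hw w' hw' => dist_le_dist_shear hl hw.1 hw'.1) (d := 3) (by norm_num)
  rw [shear_image_box hl hcr, hausdorffMeasure_pi_closedBall hr, image_id, ← mul_assoc] at himage
  norm_num at himage
  exact himage

end Boxes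

end CauchyLeray

section LpLowerBound

open Set

theorem le_re_inv_sq {d : ℂ} {T : ℝ} (hT : 0 < T) (hre : d.re ∈ Icc (9 / 20 * T) (3 * T))
    (him : |d.im| ≤ T / 5) : 1 / (1000 * T ^ 2) ≤ ((d ^ 2)⁻¹).re := by
  have him_sq : d.im ^ 2 ≤ (T / 5) ^ 2 := sq_le_sq.2 (him.trans (le_abs_self _))
  have hre_le : d.re ^ 2 ≤ (3 * T) ^ 2 :=
    pow_le_pow_left₀ ((by positivity : 0 ≤ 9 / 20 * T).trans hre.1) hre.2 2
  have hre_ge : (9 / 20 * T) ^ 2 ≤ d.re ^ 2 := pow_le_pow_left₀ (by positivity) hre.1 2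
  have hsum : 0 < d.re ^ 2 + d.im ^ 2 := by nlinarith
  calc 1 / (1000 * T ^ 2) ≤ (4 / 25 * T ^ 2) / (10 * T ^ 2) ^ 2 := by
        rw [div_le_div_iff₀ (by positivity) (by positivity)]
        nlinarith [sq_nonneg (T ^ 2)]
    _ ≤ (d.re ^ 2 - d.im ^ 2) / (d.re ^ 2 + d.im ^ 2) ^ 2 := by
        gcongr
        · nlinarith
        · nlinarith
        · nlinarith
    _ = ((d ^ 2)⁻¹).re := by
        rw [inv_re, map_pow, normSq_apply, pow_two d, mul_re]
        ring_nf

theorem one_div_toReal_le_one {p : ℝ≥0∞} (hp : 1 ≤ p) : 1 / p.toReal ≤ 1 := by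
  rcases eq_or_ne p ⊤ with rfl | hp'
  · simp
  · have hp1 : 1 ≤ p.toReal := by simpa using ENNReal.toReal_mono hp' hp
    exact (div_le_one (zero_lt_one.trans_le hp1)).2 hp1

theorem ofReal_le_mul_of_eLpNorm_le {α : Type*} {E F : Type*} [MeasurableSpace α]
    [NormedAddCommGroup E] [NormedAddCommGroup F] {ν : Measure α} {p A C : ℝ≥0∞} {f : α → E}
    {g : α → F} {S T : Set α} {K : ℝ} (hp : 1 ≤ p) (hC : 1 ≤ C) (hK : 0 ≤ K)
    (hT : MeasurableSet T) (hT0 : ν T ≠ 0) (hTtop : ν T ≠ ⊤) (hST : ν S ≤ C * ν T)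
    (hf : ∀ᵐ x ∂ν, ‖f x‖ ≤ S.indicator 1 x) (hg : ∀ x ∈ T, K ≤ ‖g x‖)
    (hfg : eLpNorm g p ν ≤ A * eLpNorm f p ν) : ENNReal.ofReal K ≤ A * C := by
  set q := 1 / p.toReal with hq
  have hq0 : 0 ≤ q := by positivity
  have hf_le : eLpNorm f p ν ≤ ν S ^ q := by
    calc eLpNorm f p ν ≤ eLpNorm (S.indicator fun _ => (1 : ℝ)) p ν :=
          eLpNorm_mono_ae_real hf
      _ ≤ ν S ^ q := by
          simpa [hq] using eLpNorm_indicator_const_le (1 : ℝ) p (μ := ν) (s := S)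
  have hg_ge : ENNReal.ofReal K * ν T ^ q ≤ eLpNorm g p ν := by
    rw [← Real.enorm_of_nonneg hK,
      ← eLpNorm_indicator_const' hT hT0 (zero_lt_one.trans_le hp).ne']
    refine eLpNorm_mono fun x => ?_
    by_cases hx : x ∈ T
    · simpa only [indicator_of_mem hx, Real.norm_of_nonneg hK] using hg x hx
    · simp only [indicator_of_notMem hx, norm_zero, norm_nonneg]
  have hST_rpow : ν S ^ q ≤ C * ν T ^ q := by
    calc ν S ^ q ≤ (C * ν T) ^ q := ENNReal.rpow_le_rpow hST hq0
      _ = C ^ q * ν T ^ q := ENNReal.mul_rpow_of_nonneg _ _ hq0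
      _ ≤ C ^ (1 : ℝ) * ν T ^ q := by
          gcongr
          exact one_div_toReal_le_one hp
      _ = C * ν T ^ q := by rw [ENNReal.rpow_one]
  have hmul : ENNReal.ofReal K * ν T ^ q ≤ A * C * ν T ^ q :=
    calc ENNReal.ofReal K * ν T ^ q ≤ A * ν S ^ q := hg_ge.trans (hfg.trans (by gcongr))
      _ ≤ A * (C * ν T ^ q) := by gcongr
      _ = A * C * ν T ^ q := (mul_assoc _ _ _).symm
  exact (ENNReal.mul_le_mul_iff_left (ENNReal.rpow_pos hT0.bot_lt hTtop).ne'
    (ENNReal.rpow_ne_top_of_nonneg hq0 hTtop)).1 hmul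

end LpLowerBound

namespace CauchyLeray

open Set Filter Topology

section KernelEstimate

variable {τ : ℝ} {w z : C2}

theorem one_sub_coord_two_mem_Icc (hw : w ∈ bD) (hpos : 0 < coord 2 w)
    (h0 : |coord 0 w| ≤ 2 * τ) (h1 : coord 1 w ^ 2 ≤ τ / 256) (h3 : |coord 3 w| ≤ τ / 1000) :
    1 - coord 2 w ∈ Icc 0 (5 * τ ^ 2) := by
  have hsum := coord_sum_eq_one hw
  have h0sq : coord 0 w ^ 2 ≤ (2 * τ) ^ 2 := sq_le_sq.2 (h0.trans (le_abs_self _))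
  have h3sq : coord 3 w ^ 2 ≤ (τ / 1000) ^ 2 := sq_le_sq.2 (h3.trans (le_abs_self _))
  have h1four : (coord 1 w ^ 2) ^ 2 ≤ (τ / 256) ^ 2 := pow_le_pow_left₀ (sq_nonneg _) h1 2
  have hle : coord 2 w ≤ 1 := (sq_le_one_iff₀ hpos.le).1 (by nlinarith)
  have hsq : coord 2 w ^ 2 ≤ coord 2 w := by nlinarith
  exact ⟨by linarith, by nlinarith⟩

theorem Delta_re_mem_Icc (hτ : τ ∈ Icc 0 (1 / 10000)) (hw : w ∈ bD) (hz : z ∈ bD)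
    (h2 : |coord 2 w - coord 2 z| ≤ 5 * τ ^ 2) (h0w : |coord 0 w| ≤ τ / 160)
    (h0z : coord 0 z ∈ Icc τ (2 * τ)) (h1w : coord 1 w ^ 2 ≤ τ / 256)
    (h1z : coord 1 z ^ 2 ≤ τ / 256) (h3w : |coord 3 w| ≤ τ / 1000)
    (h3z : |coord 3 z| ≤ τ / 1000) : (Delta w z).re ∈ Icc (9 / 20 * τ ^ 2) (3 * τ ^ 2) := by
  have hre := two_mul_Delta_re w z
  rw [show rho w = 0 from hw, show rho z = 0 from hz] at hre
  obtain ⟨hτ0, hτ1⟩ := hτ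
  obtain ⟨h0z_ge, h0z_le⟩ := h0z
  obtain ⟨h0w_ge, h0w_le⟩ := abs_le.1 h0w
  have hd0_ge : 9 / 10 * τ ^ 2 ≤ (coord 0 w - coord 0 z) ^ 2 := by nlinarith
  have hd0_le : (coord 0 w - coord 0 z) ^ 2 ≤ 5 * τ ^ 2 := by nlinarith
  have hd2 : (coord 2 w - coord 2 z) ^ 2 ≤ (τ / 10) ^ 2 :=
    sq_le_sq.2 ((h2.trans (by nlinarith)).trans (le_abs_self _))
  have hd3 : (coord 3 w - coord 3 z) ^ 2 ≤ (τ / 10) ^ 2 :=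
    sq_le_sq.2 (((abs_sub _ _).trans (by linarith)).trans (le_abs_self _))
  have hform_nonneg : 0 ≤ 3 * coord 1 w ^ 2 + 2 * coord 1 w * coord 1 z + coord 1 z ^ 2 := by
    linarith [sq_nonneg (coord 1 w + coord 1 z), sq_nonneg (coord 1 w),
      add_sq (coord 1 w) (coord 1 z)]
  have hd1 : (coord 1 w - coord 1 z) ^ 2
      * (3 * coord 1 w ^ 2 + 2 * coord 1 w * coord 1 z + coord 1 z ^ 2) ≤ τ / 10 * (τ / 10) := by
    gcongr
    · linarith [sq_nonneg (coord 1 w + coord 1 z), add_sq (coord 1 w) (coord 1 z),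
        sub_sq (coord 1 w) (coord 1 z)]
    · linarith [sq_nonneg (coord 1 w - coord 1 z), sub_sq (coord 1 w) (coord 1 z)]
  have hd1_nonneg := mul_nonneg (sq_nonneg (coord 1 w - coord 1 z)) hform_nonneg
  constructor
  · linarith [sq_nonneg (coord 2 w - coord 2 z), sq_nonneg (coord 3 w - coord 3 z)]
  · linarith

theorem abs_Delta_im_le (hτ : τ ∈ Icc 0 (1 / 10000)) (h2w : coord 2 w ∈ Icc 0 1)
    (h2z : |coord 2 z - 1| ≤ 5 * τ ^ 2) (h0 : |coord 0 w - coord 0 z| ≤ 3 * τ)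
    (h1w : coord 1 w ^ 2 ≤ τ / 256) (h01 : |coord 0 w * coord 1 z| ≤ τ ^ 2 / 256)
    (h3w : |coord 3 w| ≤ τ / 1000) (h3w' : |coord 3 w + coord 0 w * coord 1 w| ≤ τ ^ 2 / 16)
    (h3z : |coord 3 z| ≤ τ ^ 2 / 16) : |(Delta w z).im| ≤ τ ^ 2 / 5 := by
  obtain ⟨hτ0, hτ1⟩ := hτ
  have hcube : |2 * coord 1 w ^ 3 * (coord 0 w - coord 0 z)| ≤ τ ^ 2 / 100 := by
    have h1 : |coord 1 w| ≤ 1 / 1600 := abs_le_of_sq_le_sq (by linarith) (by norm_num)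
    calc |2 * coord 1 w ^ 3 * (coord 0 w - coord 0 z)|
        = 2 * (coord 1 w ^ 2 * |coord 1 w|) * |coord 0 w - coord 0 z| := by
          rw [abs_mul, abs_mul, abs_two, pow_succ, abs_mul, abs_sq]
      _ ≤ 2 * (τ / 256 * (1 / 1600)) * (3 * τ) := by gcongr
      _ ≤ τ ^ 2 / 100 := by nlinarith
  have hmul : |coord 2 w * coord 3 z| ≤ τ ^ 2 / 16 := by
    rw [abs_mul, abs_of_nonneg h2w.1]
    exact (mul_le_of_le_one_left (abs_nonneg _) h2w.2).trans h3z
  have hprod : |coord 3 w * (coord 2 z - 1)| ≤ τ ^ 2 / 100 := by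
    calc |coord 3 w * (coord 2 z - 1)| = |coord 3 w| * |coord 2 z - 1| := abs_mul _ _
      _ ≤ τ / 1000 * (5 * τ ^ 2) := by gcongr
      _ ≤ τ ^ 2 / 100 := by nlinarith
  rw [show (Delta w z).im = (coord 3 w + coord 0 w * coord 1 w) - coord 0 w * coord 1 z
      - 2 * coord 1 w ^ 3 * (coord 0 w - coord 0 z) - coord 2 w * coord 3 z
      + coord 3 w * (coord 2 z - 1) by rw [Delta_im]; ring]
  rw [abs_le] at *
  constructor <;> linarith

end KernelEstimate

section TestBoxes

variable {t : ℝ} {w z : C2}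

/-- The half-widths, in the coordinates `shear 1`, of the boxes about `(0, 1)` that carry the test
functions. -/
def sourceRadius (t : ℝ) : Fin 3 → ℝ := ![t ^ 5 / 16, t ^ 2 / 16, t ^ 8 / 16]

/-- The box supporting the test function with parameter `t`. -/
def sourceBox (t : ℝ) : Set C2 := box 1 0 (sourceRadius t)

/-- The half-size box on which the test function with parameter `t` equals `1`. -/
def sourceCore (t : ℝ) : Set C2 := box 1 0 fun i => sourceRadius t i / 2

/-- The box `t⁴ ≤ u₁ ≤ 2t⁴`, `|v₁| ≤ t³/16`, `|v₂| ≤ t⁸/16` on which the transform of the test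
function is large. -/
def targetBox (t : ℝ) : Set C2 := box 0 ![3 / 2 * t ^ 4, 0, 0] ![t ^ 4 / 2, t ^ 3 / 16, t ^ 8 / 16]

theorem sourceRadius_pos (ht : 0 < t) (i : Fin 3) : 0 < sourceRadius t i := by
  fin_cases i <;> simp [sourceRadius, ht]

theorem sourceRadius_le (ht : t ∈ Ioc 0 (1 / 10)) (i : Fin 3) : sourceRadius t i ≤ 1 / 4 := by
  have hpow (n) : t ^ n ≤ 1 := pow_le_one₀ ht.1.le (ht.2.trans (by norm_num))
  fin_cases i <;>
    simp only [sourceRadius, Fin.mk_zero, Fin.mk_one, Fin.reduceFinMk, Matrix.cons_val]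
  · linarith [hpow 5]
  · linarith [hpow 2]
  · linarith [hpow 8]

theorem prod_sourceRadius (t : ℝ) : ∏ i, sourceRadius t i = t ^ 15 / 4096 := by
  simp only [sourceRadius, Fin.prod_univ_three, Matrix.cons_val]
  ring

theorem hausdorffMeasure_sourceBox_le (ht : t ∈ Ioc 0 (1 / 10)) :
    μH[3] (sourceBox t) ≤ 1000 * ENNReal.ofReal (t ^ 15 / 4096) := by
  rw [← prod_sourceRadius]
  exact hausdorffMeasure_box_le (by simp) (fun i => (sourceRadius_pos ht.1 i).le)
    fun i => by simpa using sourceRadius_le ht i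

theorem le_hausdorffMeasure_sourceCore (ht : t ∈ Ioc 0 (1 / 10)) :
    ENNReal.ofReal (t ^ 15 / 32768) ≤ μH[3] (sourceCore t) := by
  have hprod : ∏ i, sourceRadius t i / 2 = t ^ 15 / 32768 := by
    rw [Finset.prod_div_distrib, prod_sourceRadius, Fin.prod_const]
    ring
  rw [← hprod]
  refine ofReal_prod_le_hausdorffMeasure_box (by simp)
    (fun i => (half_pos (sourceRadius_pos ht.1 i)).le) fun i => ?_
  simpa using (half_le_self (sourceRadius_pos ht.1 i).le).trans (sourceRadius_le ht i)

theorem le_hausdorffMeasure_targetBox (ht : t ∈ Ioc 0 (1 / 10)) :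
    ENNReal.ofReal (t ^ 15 / 512) ≤ μH[3] (targetBox t) := by
  have ht0 : 0 ≤ t := ht.1.le
  have hpow {n : ℕ} (hn : n ≠ 0) : t ^ n ≤ 1 / 10 :=
    (pow_le_of_le_one ht0 (ht.2.trans (by norm_num)) hn).trans ht.2
  have hprod : ∏ i, ![t ^ 4 / 2, t ^ 3 / 16, t ^ 8 / 16] i = t ^ 15 / 512 := by
    simp only [Fin.prod_univ_three, Matrix.cons_val]
    ring
  rw [← hprod]
  refine ofReal_prod_le_hausdorffMeasure_box (by simp) (fun i => ?_) fun i => ?_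
  · fin_cases i <;> simp only [Fin.mk_zero, Fin.mk_one, Fin.reduceFinMk, Matrix.cons_val] <;>
      positivity
  · fin_cases i <;> simp only [Fin.mk_zero, Fin.mk_one, Fin.reduceFinMk, Matrix.cons_val, abs_zero]
    · rw [abs_of_nonneg (by positivity)]
      linarith [hpow four_ne_zero]
    · linarith [hpow three_ne_zero]
    · linarith [hpow (n := 8) (by norm_num)]

theorem hausdorffMeasure_sourceBox_le_targetBox (ht : t ∈ Ioc 0 (1 / 10)) :
    μH[3] (sourceBox t) ≤ 125 * μH[3] (targetBox t) := by
  calc μH[3] (sourceBox t) ≤ 1000 * ENNReal.ofReal (t ^ 15 / 4096) :=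
        hausdorffMeasure_sourceBox_le ht
    _ = 125 * ENNReal.ofReal (t ^ 15 / 512) := by
        rw [show (1000 : ℝ≥0∞) = 125 * ENNReal.ofReal 8 by norm_num, mul_assoc,
          ← ENNReal.ofReal_mul (by norm_num)]
        ring_nf
    _ ≤ 125 * μH[3] (targetBox t) := by
        gcongr
        exact le_hausdorffMeasure_targetBox ht

theorem abs_coord_le_of_mem_sourceBox (hw : w ∈ sourceBox t) :
    |coord 0 w| ≤ t ^ 5 / 16 ∧ |coord 1 w| ≤ t ^ 2 / 16 ∧
      |coord 3 w + coord 0 w * coord 1 w| ≤ t ^ 8 / 16 := by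
  have hshear := abs_shear_sub_le_of_mem_box hw
  refine ⟨?_, ?_, ?_⟩
  · simpa [shear, sourceRadius] using hshear 0
  · simpa [shear, sourceRadius] using hshear 1
  · simpa [shear, sourceRadius] using hshear 2

theorem abs_coord_le_of_mem_targetBox (hz : z ∈ targetBox t) :
    coord 0 z ∈ Icc (t ^ 4) (2 * t ^ 4) ∧ |coord 1 z| ≤ t ^ 3 / 16 ∧ |coord 3 z| ≤ t ^ 8 / 16 := by
  have hshear := abs_shear_sub_le_of_mem_box hz
  refine ⟨?_, ?_, ?_⟩
  · have h0 : |coord 0 z - 3 / 2 * t ^ 4| ≤ t ^ 4 / 2 := hshear 0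
    obtain ⟨hge, hle⟩ := abs_le.1 h0
    exact ⟨by linarith, by linarith⟩
  · simpa [shear] using hshear 1
  · simpa [shear] using hshear 2

theorem abs_coord_three_le_of_mem_sourceBox (ht : t ∈ Ioc 0 (1 / 10)) (hw : w ∈ sourceBox t) :
    |coord 3 w| ≤ t ^ 4 / 1000 := by
  obtain ⟨h0, h1, h3⟩ := abs_coord_le_of_mem_sourceBox hw
  have ht0 := ht.1
  have hprod : |coord 0 w * coord 1 w| ≤ t ^ 4 * t ^ 3 / 256 :=
    calc |coord 0 w * coord 1 w| = |coord 0 w| * |coord 1 w| := abs_mul _ _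
      _ ≤ t ^ 5 / 16 * (t ^ 2 / 16) := by gcongr
      _ = t ^ 4 * t ^ 3 / 256 := by ring
  have hcube : t ^ 4 * t ^ 3 ≤ t ^ 4 * (1 / 10) ^ 3 := by gcongr; exact ht.2
  have hfour : t ^ 4 * t ^ 4 ≤ t ^ 4 * (1 / 10) ^ 4 := by gcongr; exact ht.2
  calc |coord 3 w| = |(coord 3 w + coord 0 w * coord 1 w) - coord 0 w * coord 1 w| := by ring_nf
    _ ≤ |coord 3 w + coord 0 w * coord 1 w| + |coord 0 w * coord 1 w| := abs_sub _ _
    _ ≤ t ^ 4 / 1000 := by nlinarith [pow_pos ht0 4]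

theorem abs_coord_zero_le_of_mem_sourceBox (ht : t ∈ Ioc 0 (1 / 10)) (hw : w ∈ sourceBox t) :
    |coord 0 w| ≤ t ^ 4 / 160 :=
  (abs_coord_le_of_mem_sourceBox hw).1.trans (by nlinarith [ht.2, pow_pos ht.1 4])

theorem sq_coord_one_le_of_mem_targetBox (ht : t ∈ Ioc 0 (1 / 10)) (hz : z ∈ targetBox t) :
    coord 1 z ^ 2 ≤ t ^ 4 / 256 := by
  have hle : t ^ 3 / 16 ≤ t ^ 2 / 16 := by nlinarith [ht.2, pow_pos ht.1 2]
  calc coord 1 z ^ 2 ≤ (t ^ 2 / 16) ^ 2 :=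
        sq_le_sq.2 (((abs_coord_le_of_mem_targetBox hz).2.1.trans hle).trans (le_abs_self _))
    _ = t ^ 4 / 256 := by ring

theorem abs_coord_three_le_of_mem_targetBox (ht : t ∈ Ioc 0 (1 / 10)) (hz : z ∈ targetBox t) :
    |coord 3 z| ≤ t ^ 4 / 1000 := by
  have hfour : t ^ 4 * t ^ 4 ≤ t ^ 4 * (1 / 10) ^ 4 := by gcongr; exacts [ht.1.le, ht.2]
  linarith [(abs_coord_le_of_mem_targetBox hz).2.2, pow_add t 4 4, pow_pos ht.1 4]

/-- On these boxes `Δ` is of size `t⁸` and close to the positive real axis. -/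
theorem le_re_inv_Delta_sq (ht : t ∈ Ioc 0 (1 / 10)) (hw : w ∈ sourceBox t)
    (hz : z ∈ targetBox t) : 1 / (1000 * t ^ 16) ≤ ((Delta w z ^ 2)⁻¹).re := by
  obtain ⟨h0w, h1w, h3w'⟩ := abs_coord_le_of_mem_sourceBox hw
  obtain ⟨h0z, h1z, h3z⟩ := abs_coord_le_of_mem_targetBox hz
  have h0w' := abs_coord_zero_le_of_mem_sourceBox ht hw
  have h3w := abs_coord_three_le_of_mem_sourceBox ht hw
  have h1z' := sq_coord_one_le_of_mem_targetBox ht hz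
  have h3z' := abs_coord_three_le_of_mem_targetBox ht hz
  obtain ⟨⟨hwbD, hwpos, -⟩, -⟩ := hw
  obtain ⟨⟨hzbD, hzpos, -⟩, -⟩ := hz
  have ht0 := ht.1
  have hτ : t ^ 4 ∈ Icc 0 (1 / 10000) :=
    ⟨by positivity, (pow_le_pow_left₀ ht0.le ht.2 4).trans (by norm_num)⟩
  have hτsq : (t ^ 4) ^ 2 = t ^ 8 := by ring
  have h1w' : coord 1 w ^ 2 ≤ t ^ 4 / 256 :=
    (sq_le_sq.2 (h1w.trans (le_abs_self _))).trans_eq (by ring)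
  have h01 : |coord 0 w * coord 1 z| ≤ (t ^ 4) ^ 2 / 256 :=
    calc |coord 0 w * coord 1 z| = |coord 0 w| * |coord 1 z| := abs_mul _ _
      _ ≤ t ^ 5 / 16 * (t ^ 3 / 16) := by gcongr
      _ = (t ^ 4) ^ 2 / 256 := by ring
  have h0 : |coord 0 w - coord 0 z| ≤ 3 * t ^ 4 := by
    obtain ⟨hge, hle⟩ := abs_le.1 h0w'
    exact abs_le.2 ⟨by linarith [h0z.2], by linarith [h0z.1]⟩
  have h2w := one_sub_coord_two_mem_Icc hwbD hwpos (h0w'.trans (by linarith [hτ.1])) h1w' h3w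
  have h2z := one_sub_coord_two_mem_Icc hzbD hzpos
    (abs_le.2 ⟨by linarith [hτ.1, h0z.1], h0z.2⟩) h1z' h3z'
  have h2 : |coord 2 w - coord 2 z| ≤ 5 * (t ^ 4) ^ 2 :=
    abs_le.2 ⟨by linarith [h2w.2, h2z.1], by linarith [h2w.1, h2z.2]⟩
  have hre := Delta_re_mem_Icc hτ hwbD hzbD h2 h0w' h0z h1w' h1z' h3w h3z'
  have him := abs_Delta_im_le hτ ⟨hwpos.le, by linarith [h2w.1]⟩
    (abs_le.2 ⟨by linarith [h2z.2], by linarith [h2z.1, h2z.2]⟩) h0 h1w' h01 h3w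
    (hτsq ▸ h3w') (hτsq ▸ h3z)
  rw [show t ^ 16 = ((t ^ 4) ^ 2) ^ 2 by ring]
  exact le_re_inv_sq (by positivity) hre him

end TestBoxes

open scoped ContDiff Manifold

section Unboundedness

theorem exists_contDiff_bump_box {l : ℝ} {r : Fin 3 → ℝ} (hl : |l| ≤ 1)
    (hr : ∀ i, r i ∈ Ioc 0 (1 / 4)) :
    ∃ φ : C2 → ℝ, ContDiff ℝ 1 φ ∧ (∀ w, φ w ∈ Icc 0 1) ∧
      (∀ w ∈ bD, φ w ≠ 0 → w ∈ box l 0 r) ∧ (∀ w ∈ box l 0 fun i => r i / 2, φ w = 1) ∧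
      tsupport φ ⊆ {w | ∀ i, |shear l w i| ≤ r i} := by
  have hshear := continuous_shear l
  let U : Set C2 := {w | 0 < coord 2 w} ∩ ⋂ i, {w | |shear l w i| < r i}
  let K : Set C2 := {w | 1 / 2 ≤ coord 2 w} ∩ ⋂ i, {w | |shear l w i| ≤ r i / 2}
  have hU : IsOpen U := (isOpen_lt continuous_const (coord 2).continuous).inter
    (isOpen_iInter_of_finite fun i => isOpen_lt (by fun_prop) continuous_const)
  have hK : IsClosed K := (isClosed_le continuous_const (coord 2).continuous).inter
    (isClosed_iInter fun i => isClosed_le (by fun_prop) continuous_const)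
  have hKU : K ⊆ U := by
    refine inter_subset_inter (fun w (hw : 1 / 2 ≤ coord 2 w) => one_half_pos.trans_le hw) ?_
    exact iInter_mono fun i w (hw : |shear l w i| ≤ r i / 2) => hw.trans_lt (half_lt_self (hr i).1)
  obtain ⟨φ, hφ, hrange, hsupp, hone⟩ :=
    exists_contMDiff_support_eq_eq_one_iff (n := 1) 𝓘(ℝ, C2) hU hK hKU
  have hclosed : IsClosed {w | ∀ i, |shear l w i| ≤ r i} := by
    rw [ofPred_forall]
    exact isClosed_iInter fun i => isClosed_le (by fun_prop) continuous_const
  refine ⟨φ, hφ.contDiff, fun w => hrange (mem_range_self w), fun w hw hφw => ?_, fun w hw => ?_,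
    closure_minimal (fun w hw i => (mem_iInter.1 (hsupp ▸ hw : w ∈ U).2 i).le) hclosed⟩
  · have hwU : w ∈ U := hsupp ▸ hφw
    have hle (i) : |shear l w i| ≤ r i := (mem_iInter.1 hwU.2 i).le
    exact ⟨⟨hw, hwU.1, fun i => (hle i).trans (hr i).2⟩, fun i _ => by simpa using hle i⟩
  · refine (hone w).1 ⟨half_le_coord_two_of_mem_patch hl hw.1, mem_iInter.2 fun i => ?_⟩
    simpa using abs_shear_sub_le_of_mem_box hw i

theorem mul_measureReal_le_re_leray {φ : C2 → ℝ} (hφ : Continuous φ) (hφ0 : ∀ w, 0 ≤ φ w) {z : C2}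
    (hz : z ∈ bD) (hsupp : z ∉ tsupport fun w => (φ w : ℂ)) {Q : Set C2} (hQ : MeasurableSet Q)
    (hQD : Q ⊆ bD) (hφQ : ∀ w ∈ Q, φ w = 1) {K : ℝ} (hK : 0 ≤ K)
    (hker : ∀ w ∈ bD, φ w ≠ 0 → K ≤ ((Delta w z ^ 2)⁻¹).re) :
    K * (μH[3] : Measure C2).real Q ≤ (leray (fun w => (φ w : ℂ)) z).re := by
  have hkernel := integrable_div_Delta_sq (continuous_ofReal.comp hφ) hz.le (.inr hsupp)
  have hpoint (w) (hw : w ∈ bD) : Q.indicator (fun _ => K) w ≤ (φ w / Delta w z ^ 2 : ℂ).re := by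
    rw [div_eq_mul_inv, re_ofReal_mul]
    by_cases hφw : φ w = 0
    · have hwQ : w ∉ Q := fun hwQ => zero_ne_one (hφw.symm.trans (hφQ w hwQ))
      rw [indicator_of_notMem hwQ, hφw, zero_mul]
    · have hle := hker w hw hφw
      by_cases hwQ : w ∈ Q
      · rwa [indicator_of_mem hwQ, hφQ w hwQ, one_mul]
      · rw [indicator_of_notMem hwQ]
        exact mul_nonneg (hφ0 w) (hK.trans hle)
  calc K * (μH[3] : Measure C2).real Q
      = ∫ w in bD, Q.indicator (fun _ => K) w ∂μH[3] := by
        rw [integral_indicator_const _ hQ, measureReal_restrict_apply hQ, inter_eq_left.2 hQD,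
          smul_eq_mul, mul_comm]
    _ ≤ ∫ w in bD, (φ w / Delta w z ^ 2 : ℂ).re ∂μH[3] :=
        setIntegral_mono_on ((integrable_const K).indicator hQ) hkernel.re isClosed_bD.measurableSet
          hpoint
    _ = (leray (fun w => (φ w : ℂ)) z).re := integral_re hkernel

theorem box_subset_bD (l : ℝ) (c r : Fin 3 → ℝ) : box l c r ⊆ bD := fun _ hw => hw.1.1

theorem le_re_leray_of_mem_targetBox {t : ℝ} (ht : t ∈ Ioc 0 (1 / 10)) {φ : C2 → ℝ}
    (hφ : Continuous φ) (hφ0 : ∀ w, 0 ≤ φ w) (hφbox : ∀ w ∈ bD, φ w ≠ 0 → w ∈ sourceBox t)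
    (hφcore : ∀ w ∈ sourceCore t, φ w = 1) {z : C2} (hz : z ∈ targetBox t)
    (hsupp : z ∉ tsupport fun w => (φ w : ℂ)) :
    1 / (32768000 * t) ≤ (leray (fun w => (φ w : ℂ)) z).re := by
  have ht0 := ht.1
  have hcoreD : sourceCore t ⊆ bD := box_subset_bD _ _ _
  have hfinite : μH[3] (sourceCore t) ≠ ⊤ :=
    ((measure_mono hcoreD).trans_lt (isFiniteMeasure_restrict.1 inferInstance).lt_top).ne
  have hcore : t ^ 15 / 32768 ≤ (μH[3] : Measure C2).real (sourceCore t) :=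
    (ENNReal.ofReal_le_iff_le_toReal hfinite).1 (le_hausdorffMeasure_sourceCore ht)
  calc 1 / (32768000 * t) = 1 / (1000 * t ^ 16) * (t ^ 15 / 32768) := by
        field_simp
        norm_num
    _ ≤ 1 / (1000 * t ^ 16) * (μH[3] : Measure C2).real (sourceCore t) := by gcongr
    _ ≤ (leray (fun w => (φ w : ℂ)) z).re :=
        mul_measureReal_le_re_leray hφ hφ0 (box_subset_bD _ _ _ hz) hsupp (measurableSet_box _ _ _)
          hcoreD hφcore (by positivity)
          fun w hw hφw => le_re_inv_Delta_sq ht (hφbox w hw hφw) hz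

theorem ofReal_le_mul_of_forall_eLpNorm_le {p A : ℝ≥0∞} (hp : 1 ≤ p)
    (hA : ∀ f Cf : C2 → ℂ, ContDiff ℝ 1 f → IsCLBoundaryValue f Cf →
      eLpNorm Cf p (μH[3].restrict bD) ≤ A * eLpNorm f p (μH[3].restrict bD))
    {t : ℝ} (ht : t ∈ Ioc 0 (1 / 10)) : ENNReal.ofReal (1 / (32768000 * t)) ≤ A * 125 := by
  have ht0 := ht.1
  obtain ⟨φ, hφ, hrange, hbox, hcore, hsupp⟩ := exists_contDiff_bump_box (l := 1) (by simp)
    fun i => ⟨sourceRadius_pos ht.1 i, sourceRadius_le ht i⟩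
  have hf : ContDiff ℝ 1 fun w => (φ w : ℂ) := ofRealCLM.contDiff.comp hφ
  obtain ⟨Cf, hCf⟩ := exists_isCLBoundaryValue hf
  have hfar (z) (hz : z ∈ targetBox t) : z ∉ tsupport fun w => (φ w : ℂ) := fun hzφ => by
    have h0 : |coord 0 z| ≤ t ^ 5 / 16 := hsupp (tsupport_comp_subset ofReal_zero φ hzφ) 0
    nlinarith [(abs_coord_le_of_mem_targetBox hz).1.1, le_abs_self (coord 0 z), ht.2, pow_pos ht0 4]
  have hrestrict {l c r} : (μH[3] : Measure C2).restrict bD (box l c r) = μH[3] (box l c r) := by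
    rw [Measure.restrict_apply (measurableSet_box _ _ _), inter_eq_left.2 (box_subset_bD _ _ _)]
  refine ofReal_le_mul_of_eLpNorm_le (S := sourceBox t) (T := targetBox t) hp (by norm_num)
    (by positivity) (measurableSet_box _ _ _) ?_ (measure_ne_top _ _) ?_ ?_ (fun z hz => ?_)
    (hA _ Cf hf hCf)
  · rw [targetBox, hrestrict]
    exact ((ENNReal.ofReal_pos.2 (by positivity)).trans_le (le_hausdorffMeasure_targetBox ht)).ne'
  · rw [targetBox, sourceBox, hrestrict, hrestrict]
    exact hausdorffMeasure_sourceBox_le_targetBox ht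
  · filter_upwards [ae_restrict_mem isClosed_bD.measurableSet] with w hw
    rw [norm_real, Real.norm_of_nonneg (hrange w).1]
    by_cases hφw : φ w = 0
    · rw [hφw]
      exact indicator_nonneg (fun _ _ => zero_le_one) w
    · rw [indicator_of_mem (show w ∈ sourceBox t from hbox w hw hφw)]
      exact (hrange w).2
  · rw [eq_leray_of_isCLBoundaryValue hf.continuous hCf (box_subset_bD _ _ _ hz) (hfar z hz)]
    exact (le_re_leray_of_mem_targetBox ht hφ.continuous (fun w => (hrange w).1) hbox hcore hz
      (hfar z hz)).trans (re_le_norm _)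

end Unboundedness

end CauchyLeray

/-- For `f` the restriction to `bD` of a `C¹` function, the boundary value `𝒞f` of the
Cauchy–Leray integral exists (uniformly in `z ∈ bD`), and for every `p ∈ [1,∞]` there is
no finite constant `A` with `‖𝒞f‖_{L^p(bD,H³)} ≤ A‖f‖_{L^p(bD,H³)}` for all such `f`;
i.e. `f ↦ 𝒞f` does not extend to a bounded operator on `L^p(bD, H³)`. -/
theorem stmt1 :
    (∀ f : C2 → ℂ, ContDiff ℝ 1 f → ∃ Cf : C2 → ℂ, IsCLBoundaryValue f Cf) ∧
    ∀ p : ℝ≥0∞, 1 ≤ p →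
      ¬ ∃ A : ℝ≥0∞, A ≠ ⊤ ∧
        ∀ f Cf : C2 → ℂ, ContDiff ℝ 1 f → IsCLBoundaryValue f Cf →
          eLpNorm Cf p (μH[3].restrict bD) ≤ A * eLpNorm f p (μH[3].restrict bD) := by
  refine ⟨fun f hf => CauchyLeray.exists_isCLBoundaryValue hf, fun p hp ⟨A, hAtop, hA⟩ => ?_⟩
  set B := (A * 125).toReal
  have hB0 : 0 ≤ B := ENNReal.toReal_nonneg
  have ht : 1 / (32768000 * (B + 1)) ∈ Set.Ioc (0 : ℝ) (1 / 10) :=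
    ⟨by positivity, one_div_le_one_div_of_le (by norm_num) (by linarith)⟩
  have hle : ENNReal.ofReal (B + 1) ≤ A * 125 := by
    have hbound := CauchyLeray.ofReal_le_mul_of_forall_eLpNorm_le hp hA ht
    rwa [show 1 / (32768000 * (1 / (32768000 * (B + 1)))) = B + 1 by field_simp] at hbound
  have hA125 : A * 125 ≠ ⊤ := ENNReal.mul_ne_top hAtop (by norm_num)
  linarith [(ENNReal.ofReal_le_iff_le_toReal hA125).1 hle]

end
end

section
/- There exists a constant c > 0 such that for all w, z ∈ bD one has 2·Re Δ(w,z) ≥ c·[ (u₁−x₁)² + (u₂−x₂)² + (v₂−y₂)² + (v₁²+y₁²)·(v₁−y₁)² ], where w=(u₁+iv₁, u₂+iv₂) and z=(x₁+iy₁, x₂+iy₂). -/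
open MeasureTheory Complex

noncomputable section

/-!
`2 Re Δ(w, z)` is the derivative of `ρ` at `w` in the direction `w - z`, so it equals
`ρ(w) - ρ(z)` plus the second-order Taylor remainder of `ρ`. The quadratic terms of `ρ` contribute
exactly the squares of the increments, and the quartic term contributes
`(v₁ - y₁)² ((v₁ + y₁)² + 2v₁²)`, where the second factor is a positive definite quadratic form in
`(v₁, y₁)`.
-/

theorem pow_four_sub_pow_four_sub_tangent {R : Type*} [CommRing R] (v y : R) :
    y ^ 4 - v ^ 4 - 4 * v ^ 3 * (y - v) = ((v + y) ^ 2 + 2 * v ^ 2) * (v - y) ^ 2 := by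
  ring

section OrderedRing

variable {R : Type*} [CommRing R] [LinearOrder R] [IsOrderedRing R]

theorem sq_add_sq_le_two_mul_add_sq_add_two_mul_sq (v y : R) :
    v ^ 2 + y ^ 2 ≤ 2 * ((v + y) ^ 2 + 2 * v ^ 2) := by
  have sum_of_squares :
      2 * ((v + y) ^ 2 + 2 * v ^ 2) = v ^ 2 + y ^ 2 + ((2 * v + y) ^ 2 + v ^ 2) := by
    ring
  rw [sum_of_squares]
  exact le_add_of_nonneg_right (add_nonneg (sq_nonneg _) (sq_nonneg _))

theorem sq_add_sq_mul_sub_sq_le_two_mul_pow_four_sub_tangent (v y : R) :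
    (v ^ 2 + y ^ 2) * (v - y) ^ 2 ≤ 2 * (y ^ 4 - v ^ 4 - 4 * v ^ 3 * (y - v)) := by
  rw [pow_four_sub_pow_four_sub_tangent, ← mul_assoc]
  exact mul_le_mul_of_nonneg_right (sq_add_sq_le_two_mul_add_sq_add_two_mul_sq v y) (sq_nonneg _)

end OrderedRing

theorem rho_eq (z : C2) :
    rho z = (z 0).re ^ 2 + (z 0).im ^ 4 + (z 1).re ^ 2 + (z 1).im ^ 2 - 1 := by
  rw [rho, Complex.sq_norm, normSq_apply]
  ring

theorem re_Delta (w z : C2) :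
    (Delta w z).re = (w 0).re * ((w 0).re - (z 0).re) + 2 * (w 0).im ^ 3 * ((w 0).im - (z 0).im)
      + (w 1).re * ((w 1).re - (z 1).re) + (w 1).im * ((w 1).im - (z 1).im) := by
  simp only [Delta, ← ofReal_pow, add_re, mul_re, sub_re, mul_im, sub_im, conj_re, conj_im,
    ofReal_re, ofReal_im, re_ofNat, im_ofNat, I_re, I_im]
  ring

theorem two_mul_re_Delta_eq_rho_sub_rho_add (w z : C2) :
    2 * (Delta w z).re = rho w - rho z
      + (((w 0).re - (z 0).re) ^ 2 + ((w 1).re - (z 1).re) ^ 2 + ((w 1).im - (z 1).im) ^ 2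
        + ((z 0).im ^ 4 - (w 0).im ^ 4 - 4 * (w 0).im ^ 3 * ((z 0).im - (w 0).im))) := by
  rw [re_Delta, rho_eq, rho_eq]
  ring

theorem stmt2_general :
    ∃ c : ℝ, 0 < c ∧ ∀ w z : C2,
      rho w - rho z
        + c * (((w 0).re - (z 0).re) ^ 2 + ((w 1).re - (z 1).re) ^ 2
          + ((w 1).im - (z 1).im) ^ 2
          + ((w 0).im ^ 2 + (z 0).im ^ 2) * ((w 0).im - (z 0).im) ^ 2)
        ≤ 2 * (Delta w z).re := by
  refine ⟨1 / 2, by norm_num, fun w z ↦ ?_⟩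
  have quartic_bound :=
    sq_add_sq_mul_sub_sq_le_two_mul_pow_four_sub_tangent (w 0).im (z 0).im
  rw [two_mul_re_Delta_eq_rho_sub_rho_add]
  linarith [sq_nonneg ((w 0).re - (z 0).re), sq_nonneg ((w 1).re - (z 1).re),
    sq_nonneg ((w 1).im - (z 1).im)]

/-- There exists `c > 0` such that for all `w, z ∈ bD`,
`2 Re Δ(w,z) ≥ c·[(u₁−x₁)² + (u₂−x₂)² + (v₂−y₂)² + (v₁²+y₁²)(v₁−y₁)²]`. -/
theorem stmt2 :
    ∃ c : ℝ, 0 < c ∧ ∀ w ∈ bD, ∀ z ∈ bD,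
      c * (((w 0).re - (z 0).re) ^ 2 + ((w 1).re - (z 1).re) ^ 2
          + ((w 1).im - (z 1).im) ^ 2
          + ((w 0).im ^ 2 + (z 0).im ^ 2) * ((w 0).im - (z 0).im) ^ 2)
        ≤ 2 * (Delta w z).re := by
  obtain ⟨c, hc, lower_bound⟩ := stmt2_general
  refine ⟨c, hc, fun w hw z hz ↦ ?_⟩
  simpa only [hw.out, hz.out, sub_self, zero_add] using lower_bound w z

end
end

section
/- Let ρ : ℂ² → ℝ be twice continuously differentiable with ρ(0)=0, ∂ρ/∂u₁(0)=∂ρ/∂v₁(0)=∂ρ/∂u₂(0)=0 and ∂ρ/∂v₂(0) = |∇ρ(0)| > 0 (coordinates w=(u₁+iv₁, u₂+iv₂)). Let Φ : ℝ³ → ℝ be continuously differentiable with Φ(0,0,0)=0, ∇Φ(0,0,0)=(0,0,0), and suppose ρ(u₁+iv₁, u₂+iΦ(u₁,v₁,u₂)) = 0 for all (u₁,v₁,u₂) in a neighborhood of the origin (so {ρ=0} is locally the graph v₂=Φ(u₁,v₁,u₂)). Define Δ(w,z) = Σ_{j=1}^{2} (∂ρ/∂w_j)(w)·(w_j−z_j),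 where ∂/∂w_j = (∂/∂u_j − i ∂/∂v_j)/2. Then there exist δ > 0 and c₁ > 0 such that for all (u₁,v₁,u₂) ∈ ℝ³ with |(u₁,v₁,u₂)| < δ, setting w = (u₁+iv₁, u₂+iΦ(u₁,v₁,u₂)), and all z ∈ ℂ² with |z| < δ, the partial derivative with respect to u₂ of the map (u₁,v₁,u₂) ↦ Δ(w(u₁,v₁,u₂), z) has absolute value at least c₁; in particular it is nonzero. -/
open Complex

noncomputable section

/-- The complex partial derivatives `∂ρ/∂w_j = (∂ρ/∂u_j − i ∂ρ/∂v_j)/2` of a real function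
`ρ` on `ℂ²`, assembled into the Cauchy–Leray denominator
`Δ(w,z) = Σ_j (∂ρ/∂w_j)(w)·(w_j − z_j)`. -/
def CLDelta (ρ : ℂ × ℂ → ℝ) (w z : ℂ × ℂ) : ℂ :=
  ((fderiv ℝ ρ w (1, 0) : ℂ) - I * (fderiv ℝ ρ w (I, 0) : ℂ)) / 2 * (w.1 - z.1)
    + ((fderiv ℝ ρ w (0, 1) : ℂ) - I * (fderiv ℝ ρ w (0, I) : ℂ)) / 2 * (w.2 - z.2)

/-!
With `∂ρ(w)` the complex-linear functional `v ↦ ∑ⱼ (∂ρ/∂wⱼ)(w) vⱼ`, the denominator is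
`Δ(w, z) = ∂ρ(w)(w - z)`. When a `C¹` map `γ` is substituted for `w` and differentiated in a
direction `e` at `p₀`, the product rule at `z = γ(p₀)` loses the term that differentiates `∂ρ`,
because `w - z` vanishes there; what remains is `∂ρ(γ(p₀))(Dγ(p₀)e)`. If `γ` parametrizes a graph
`v₂ = Φ(u₁, v₁, u₂)` and `e` is the `u₂` direction, this equals `(1 + i ∂Φ/∂u₂) ∂ρ/∂w₂`, whose first
factor never vanishes because `∂Φ/∂u₂` is real. Continuity in `(p, z)` then gives a uniform lower
bound near `(p₀, γ(p₀))`.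
-/

open scoped Topology

section Calculus

variable {𝕜 E F G : Type*} [NontriviallyNormedField 𝕜]
  [NormedAddCommGroup E] [NormedSpace 𝕜 E] [NormedAddCommGroup F] [NormedSpace 𝕜 F]
  [NormedAddCommGroup G] [NormedSpace 𝕜 G]

theorem continuousAt_lineDeriv {f : E → F} {x : E} (hf : ContDiffAt 𝕜 1 f x) (v : E) :
    ContinuousAt (fun y => lineDeriv 𝕜 f y v) x := by
  have hfderiv : ContinuousAt (fun y => fderiv 𝕜 f y v) x :=
    (hf.fderiv_right (m := 0) (by norm_num)).continuousAt.clm_apply continuousAt_const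
  refine hfderiv.congr ?_
  filter_upwards [hf.eventually (by simp)] with y hy
  exact hy.differentiableAt_one.lineDeriv_eq_fderiv.symm

theorem lineDeriv_prodMk_zero (f : E × F → G) (x : E) (y : F) (v : E) :
    lineDeriv 𝕜 f (x, y) (v, 0) = lineDeriv 𝕜 (fun x' => f (x', y)) x v := by
  simp only [lineDeriv, Prod.smul_mk, smul_zero, Prod.mk_add_mk, add_zero]

theorem deriv_snd_snd_eq_lineDeriv (f : E × F × 𝕜 → G) (p : E × F × 𝕜) :
    deriv (fun t => f (p.1, p.2.1, t)) p.2.2 = lineDeriv 𝕜 f p (0, 0, 1) := by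
  have hline (t : 𝕜) : p + t • (0, 0, 1) = (p.1, p.2.1, p.2.2 + t) := by simp [Prod.ext_iff]
  simp only [lineDeriv, hline, deriv_comp_const_add (fun t => f (p.1, p.2.1, t)), add_zero]

theorem hasFDerivAt_clm_apply_sub {L : E → F →L[𝕜] G} {γ : E → F} {γ' : E →L[𝕜] F} {x : E}
    (hL : DifferentiableAt 𝕜 L x) (hγ : HasFDerivAt γ γ' x) :
    HasFDerivAt (fun y => L y (γ y - γ x)) ((L x).comp γ') x := by
  simpa using hL.hasFDerivAt.clm_apply (hγ.sub_const (γ x))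

end Calculus

section HoloDeriv

variable {E P : Type*} [NormedAddCommGroup E] [NormedSpace ℂ E] [NormedSpace ℝ E]
  [IsScalarTower ℝ ℂ E] [NormedAddCommGroup P] [NormedSpace ℝ P]

/-- The holomorphic differential `∂ρ(w) : v ↦ (Dρ(w)v - i Dρ(w)(iv)) / 2` of a real function `ρ`,
which on `ℂⁿ` is `v ↦ ∑ⱼ (∂ρ/∂wⱼ)(w) vⱼ`. Mathlib's complex extension of a real functional supplies
its complex linearity. -/
def holoDeriv (ρ : E → ℝ) (w : E) : E →L[ℂ] ℂ :=
  (2⁻¹ : ℂ) • StrongDual.extendRCLike (fderiv ℝ ρ w)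

theorem holoDeriv_apply (ρ : E → ℝ) (w v : E) :
    holoDeriv ρ w v = ((fderiv ℝ ρ w v : ℂ) - I * (fderiv ℝ ρ w (I • v) : ℂ)) / 2 := by
  rw [div_eq_inv_mul]
  rfl

theorem contDiffAt_restrictScalars_holoDeriv {ρ : E → ℝ} {w : E} {m n : WithTop ℕ∞}
    (hρ : ContDiffAt ℝ n ρ w) (hmn : m + 1 ≤ n) :
    ContDiffAt ℝ m (fun w' => (holoDeriv ρ w').restrictScalars ℝ) w := by
  let restrict : StrongDual ℂ E →L[ℝ] E →L[ℝ] ℂ := ContinuousLinearMap.restrictScalarsL ℂ E ℂ ℝ ℝ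
  let extend : StrongDual ℝ E →L[ℝ] StrongDual ℂ E := StrongDual.extendRCLikeL (𝕜 := ℂ) (F := E)
  exact (restrict.comp ((2⁻¹ : ℂ) • extend)).contDiff.contDiffAt.comp w (hρ.fderiv_right hmn)

theorem fderiv_holoDeriv_apply_sub {ρ : E → ℝ} {γ : P → E} {p₀ : P}
    (hρ : ContDiffAt ℝ 2 ρ (γ p₀)) (hγ : DifferentiableAt ℝ γ p₀) :
    fderiv ℝ (fun p => holoDeriv ρ (γ p) (γ p - γ p₀)) p₀ =
      ((holoDeriv ρ (γ p₀)).restrictScalars ℝ).comp (fderiv ℝ γ p₀) := by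
  have hL : DifferentiableAt ℝ (fun p => (holoDeriv ρ (γ p)).restrictScalars ℝ) p₀ :=
    (contDiffAt_restrictScalars_holoDeriv hρ (m := 1)
      one_add_one_eq_two.le).differentiableAt_one.comp p₀ hγ
  exact (hasFDerivAt_clm_apply_sub hL hγ.hasFDerivAt).fderiv

theorem eventually_lt_norm_lineDeriv_holoDeriv {ρ : E → ℝ} {γ : P → E} {p₀ e : P} {c : ℝ}
    (hρ : ContDiffAt ℝ 2 ρ (γ p₀)) (hγ : ContDiffAt ℝ 1 γ p₀)
    (hc : c < ‖holoDeriv ρ (γ p₀) (fderiv ℝ γ p₀ e)‖) :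
    ∀ᶠ q in 𝓝 (p₀, γ p₀),
      c < ‖lineDeriv ℝ (fun p => holoDeriv ρ (γ p) (γ p - q.2)) q.1 e‖ := by
  let F : P × E → ℂ := fun q => holoDeriv ρ (γ q.1) (γ q.1 - q.2)
  have hγ_fst : ContDiffAt ℝ 1 (fun q : P × E => γ q.1) (p₀, γ p₀) := hγ.comp _ contDiffAt_fst
  have hF : ContDiffAt ℝ 1 F (p₀, γ p₀) :=
    (ContDiffAt.comp (p₀, γ p₀) (contDiffAt_restrictScalars_holoDeriv hρ one_add_one_eq_two.le)
      hγ_fst).clm_apply (hγ_fst.sub contDiffAt_snd)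
  have hF_base : lineDeriv ℝ F (p₀, γ p₀) (e, 0) = holoDeriv ρ (γ p₀) (fderiv ℝ γ p₀ e) := by
    have hF_slice : DifferentiableAt ℝ (fun p => F (p, γ p₀)) p₀ :=
      DifferentiableAt.comp p₀ (g := F) hF.differentiableAt_one
        (differentiableAt_id.prodMk (differentiableAt_const _))
    rw [lineDeriv_prodMk_zero, hF_slice.lineDeriv_eq_fderiv,
      fderiv_holoDeriv_apply_sub hρ hγ.differentiableAt_one]
    rfl
  rw [← hF_base] at hc
  filter_upwards [(continuousAt_lineDeriv hF (e, 0)).norm.eventually (lt_mem_nhds hc)] with q hq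
  rwa [lineDeriv_prodMk_zero] at hq

end HoloDeriv

theorem CLDelta_eq_holoDeriv (ρ : ℂ × ℂ → ℝ) (w z : ℂ × ℂ) :
    CLDelta ρ w z = holoDeriv ρ w (w - z) := by
  have hbasis : w - z = (w.1 - z.1) • ((1 : ℂ), (0 : ℂ)) + (w.2 - z.2) • ((0 : ℂ), (1 : ℂ)) := by
    simp [Prod.ext_iff]
  rw [hbasis, map_add, map_smul, map_smul, holoDeriv_apply, holoDeriv_apply]
  simp only [CLDelta, Prod.smul_mk, smul_eq_mul, mul_one, mul_zero]
  ring

/-- The parametrization `(u₁, v₁, u₂) ↦ (u₁ + i v₁, u₂ + i Φ(u₁, v₁, u₂))` of the real hypersurface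
`v₂ = Φ(u₁, v₁, u₂)` in `ℂ²`. -/
def graphMap (Φ : ℝ × ℝ × ℝ → ℝ) (p : ℝ × ℝ × ℝ) : ℂ × ℂ :=
  ((p.1 : ℂ) + p.2.1 * I, (p.2.2 : ℂ) + (Φ p : ℂ) * I)

section GraphMap

variable {Φ : ℝ × ℝ × ℝ → ℝ} {p : ℝ × ℝ × ℝ}

theorem contDiffAt_graphMap {n : WithTop ℕ∞} (hΦ : ContDiffAt ℝ n Φ p) :
    ContDiffAt ℝ n (graphMap Φ) p := by
  have hofReal : ContDiff ℝ n ((↑) : ℝ → ℂ) := ofRealCLM.contDiff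
  unfold graphMap
  fun_prop

theorem fderiv_graphMap_apply_u₂ (hΦ : DifferentiableAt ℝ Φ p) :
    fderiv ℝ (graphMap Φ) p (0, 0, 1) = (0, 1 + (fderiv ℝ Φ p (0, 0, 1) : ℂ) * I) := by
  have hofReal {f : ℝ × ℝ × ℝ → ℝ} (hf : DifferentiableAt ℝ f p) :
      HasFDerivAt (fun q => (f q : ℂ)) (ofRealCLM.comp (fderiv ℝ f p)) p :=
    ofRealCLM.hasFDerivAt.comp p hf.hasFDerivAt
  have hgraph : HasFDerivAt (graphMap Φ) _ p :=
    ((hofReal differentiableAt_fst).add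
      ((hofReal differentiableAt_snd.fst).mul_const I)).prodMk
    ((hofReal differentiableAt_snd.snd).add ((hofReal hΦ).mul_const I))
  rw [hgraph.fderiv]
  simp [fderiv.fst, fderiv.snd, mul_comm I]

theorem holoDeriv_fderiv_graphMap_ne_zero {ρ : ℂ × ℂ → ℝ} {w : ℂ × ℂ}
    (hΦ : DifferentiableAt ℝ Φ p) (hρ : holoDeriv ρ w (0, 1) ≠ 0) :
    holoDeriv ρ w (fderiv ℝ (graphMap Φ) p (0, 0, 1)) ≠ 0 := by
  set slope : ℂ := 1 + (fderiv ℝ Φ p (0, 0, 1) : ℂ) * I with hslope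
  have hslope_ne : slope ≠ 0 := fun h => by simpa [hslope] using congrArg re h
  have hdir : fderiv ℝ (graphMap Φ) p (0, 0, 1) = slope • ((0 : ℂ), (1 : ℂ)) := by
    rw [fderiv_graphMap_apply_u₂ hΦ]
    simp [hslope]
  rw [hdir, map_smul]
  exact smul_ne_zero hslope_ne hρ

end GraphMap

theorem stmt4_general {ρ : ℂ × ℂ → ℝ} {Φ : ℝ × ℝ × ℝ → ℝ} {p₀ : ℝ × ℝ × ℝ}
    (hρ : ContDiffAt ℝ 2 ρ (graphMap Φ p₀)) (hΦ : ContDiffAt ℝ 1 Φ p₀)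
    (hρ_w₂ : holoDeriv ρ (graphMap Φ p₀) (0, 1) ≠ 0) :
    ∃ δ c₁ : ℝ, 0 < δ ∧ 0 < c₁ ∧
      ∀ p : ℝ × ℝ × ℝ, dist p p₀ < δ → ∀ z : ℂ × ℂ, dist z (graphMap Φ p₀) < δ →
        c₁ ≤ ‖deriv (fun t : ℝ => CLDelta ρ (graphMap Φ (p.1, p.2.1, t)) z) p.2.2‖ := by
  have hpos := norm_pos_iff.2 (holoDeriv_fderiv_graphMap_ne_zero hΦ.differentiableAt_one hρ_w₂)
  obtain ⟨c₁, hc₁, hlt⟩ := exists_between hpos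
  obtain ⟨δ, hδ, hball⟩ := Metric.eventually_nhds_iff.1
    (eventually_lt_norm_lineDeriv_holoDeriv hρ (contDiffAt_graphMap hΦ) hlt)
  refine ⟨δ, c₁, hδ, hc₁, fun p hp z hz => ?_⟩
  rw [deriv_snd_snd_eq_lineDeriv (fun p' => CLDelta ρ (graphMap Φ p') z)]
  simp only [CLDelta_eq_holoDeriv]
  exact (hball (y := (p, z)) (max_lt hp hz)).le

/-- Let `ρ : ℂ² → ℝ` be `C²` with `ρ(0) = 0`, with vanishing partials
`∂ρ/∂u₁(0) = ∂ρ/∂v₁(0) = ∂ρ/∂u₂(0) = 0` and `∂ρ/∂v₂(0) = |∇ρ(0)| > 0`, and let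
`Φ : ℝ³ → ℝ` be `C¹` with `Φ(0) = 0`, `∇Φ(0) = 0`, and
`ρ(u₁+iv₁, u₂+iΦ(u₁,v₁,u₂)) = 0` near the origin (so `{ρ = 0}` is locally the graph
`v₂ = Φ(u₁,v₁,u₂)`). Then there are `δ > 0` and `c₁ > 0` such that for all
`(u₁,v₁,u₂)` with `|(u₁,v₁,u₂)| < δ` and all `z` with `|z| < δ`, the partial derivative
in `u₂` of `(u₁,v₁,u₂) ↦ Δ(w(u₁,v₁,u₂), z)` has absolute value at least `c₁`;
in particular it is nonzero. -/
theorem stmt4 (ρ : ℂ × ℂ → ℝ) (hρ : ContDiff ℝ 2 ρ) (hρ0 : ρ 0 = 0)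
    (hu1 : fderiv ℝ ρ 0 (1, 0) = 0)
    (hv1 : fderiv ℝ ρ 0 (I, 0) = 0)
    (hu2 : fderiv ℝ ρ 0 (0, 1) = 0)
    (hv2 : 0 < fderiv ℝ ρ 0 (0, I))
    (Φ : ℝ × ℝ × ℝ → ℝ) (hΦ : ContDiff ℝ 1 Φ)
    (hΦ0 : Φ 0 = 0) (hΦd : fderiv ℝ Φ 0 = 0)
    (hgraph : ∀ᶠ p in nhds (0 : ℝ × ℝ × ℝ),
      ρ ((p.1 : ℂ) + p.2.1 * I, (p.2.2 : ℂ) + (Φ p : ℂ) * I) = 0) :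
    ∃ δ c₁ : ℝ, 0 < δ ∧ 0 < c₁ ∧
      ∀ p : ℝ × ℝ × ℝ, ‖p‖ < δ → ∀ z : ℂ × ℂ, ‖z‖ < δ →
        c₁ ≤ ‖deriv (fun t : ℝ =>
            CLDelta ρ ((p.1 : ℂ) + p.2.1 * I,
              (t : ℂ) + (Φ (p.1, p.2.1, t) : ℂ) * I) z) p.2.2‖ := by
  have hbase : graphMap Φ 0 = 0 := by simp [graphMap, hΦ0]
  have hρ_w₂ : holoDeriv ρ 0 (0, 1) ≠ 0 := by simp [holoDeriv_apply, hu2, hv2.ne']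
  simpa only [hbase, dist_zero_right] using!
    stmt4_general (p₀ := 0) hρ.contDiffAt hΦ.contDiffAt (hbase ▸ hρ_w₂)

end
end

section
/- There exist constants c₀ ∈ (0,1) and ε₀ > 0 such that for all z, w ∈ bD and all 0 < ε < ε₀: Re Δ(w, z+εN(z)) ≥ c₀·( ε + Re Δ(w,z) ). -/
open MeasureTheory Complex

noncomputable section

/-!
Up to a factor `2`, `Re Δ(w, z)` is the real pairing of `∇ρ(w)` with `w - z`; on `bD` this is the
Bregman divergence of the convex function `ρ`, which is nonnegative and dominates
`‖∇ρ(w) - ∇ρ(z)‖²`. Moving `z` by `ε N(z)` adds `(ε / 2) ⟪∇ρ(w), ∇ρ(z) / ‖∇ρ(z)‖⟫` to `Re Δ(w, z)`,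
and this is at least `(ε / 2) (‖∇ρ(z)‖ - ‖∇ρ(w) - ∇ρ(z)‖)`. Since `‖∇ρ‖ ≥ 1` on `bD`, the gain is
of order `ε` up to an error `O(ε Re Δ(w, z))`, which is absorbed for small `ε`.
-/

open scoped RealInnerProductSpace

section InnerProductSpace

variable {E : Type*} [NormedAddCommGroup E] [InnerProductSpace ℝ E]

lemma norm_sub_norm_sub_le_inv_norm_mul_inner (a b : E) :
    ‖b‖ - ‖a - b‖ ≤ ‖b‖⁻¹ * ⟪a, b⟫ := by
  rcases eq_or_ne b 0 with rfl | hb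
  · simp
  have hb_pos : 0 < ‖b‖ := norm_pos_iff.2 hb
  have inner_split : ⟪a, b⟫ = ⟪a - b, b⟫ + ‖b‖ * ‖b‖ := by
    rw [inner_sub_left, real_inner_self_eq_norm_mul_norm]
    ring
  have cauchy_schwarz : -(‖a - b‖ * ‖b‖) ≤ ⟪a - b, b⟫ :=
    neg_le_of_abs_le (abs_real_inner_le_norm _ _)
  rw [inv_mul_eq_div, le_div_iff₀ hb_pos, inner_split]
  linarith

end InnerProductSpace

lemma sq_cube_sub_cube_le_bregman_pow_four (v y : ℝ) :
    (v ^ 3 - y ^ 3) ^ 2 ≤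
      3 * (v ^ 2 + y ^ 2) * (y ^ 4 - v ^ 4 - 4 * v ^ 3 * (y - v)) := by
  have form_nonneg : 0 ≤ v ^ 2 + v * y + y ^ 2 := by nlinarith [sq_nonneg (v + y)]
  have form_le_sum_sq : v ^ 2 + v * y + y ^ 2 ≤ 3 / 2 * (v ^ 2 + y ^ 2) := by
    nlinarith [sq_nonneg (v - y)]
  have form_le_remainder :
      v ^ 2 + v * y + y ^ 2 ≤ 2 * (y ^ 2 + 2 * y * v + 3 * v ^ 2) := by
    nlinarith [sq_nonneg (y + 3 / 2 * v), sq_nonneg v]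
  calc (v ^ 3 - y ^ 3) ^ 2
      = (v - y) ^ 2 * ((v ^ 2 + v * y + y ^ 2) * (v ^ 2 + v * y + y ^ 2)) := by ring
    _ ≤ (v - y) ^ 2 *
          (3 / 2 * (v ^ 2 + y ^ 2) * (2 * (y ^ 2 + 2 * y * v + 3 * v ^ 2))) := by
        gcongr
    _ = 3 * (v ^ 2 + y ^ 2) * (y ^ 4 - v ^ 4 - 4 * v ^ 3 * (y - v)) := by ring

lemma bregman_pow_four_nonneg (v y : ℝ) : 0 ≤ y ^ 4 - v ^ 4 - 4 * v ^ 3 * (y - v) := by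
  have factored : y ^ 4 - v ^ 4 - 4 * v ^ 3 * (y - v) =
      (y - v) ^ 2 * ((y + v) ^ 2 + 2 * v ^ 2) := by ring
  rw [factored]
  positivity

lemma gradRho_apply_zero (z : C2) : gradRho z 0 = ⟨2 * (z 0).re, 4 * (z 0).im ^ 3⟩ :=
  (mk_eq_add_mul_I _ _).symm

lemma gradRho_apply_one (z : C2) : gradRho z 1 = 2 * z 1 := rfl

lemma inner_gradRho (z x : C2) :
    ⟪gradRho z, x⟫ = 2 * (z 0).re * (x 0).re + 4 * (z 0).im ^ 3 * (x 0).im +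
      2 * ((z 1).re * (x 1).re + (z 1).im * (x 1).im) := by
  simp only [PiLp.inner_apply, Fin.sum_univ_two, gradRho_apply_zero, gradRho_apply_one,
    Complex.inner, mul_re, mul_im, conj_re, conj_im, re_ofNat, im_ofNat]
  ring

lemma norm_gradRho_sub_sq (w z : C2) :
    ‖gradRho w - gradRho z‖ ^ 2 =
      4 * (((w 0).re - (z 0).re) ^ 2 + ‖w 1 - z 1‖ ^ 2) +
        16 * ((w 0).im ^ 3 - (z 0).im ^ 3) ^ 2 := by
  simp only [EuclideanSpace.norm_sq_eq, Fin.sum_univ_two, PiLp.sub_apply, gradRho_apply_zero,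
    gradRho_apply_one, ← mul_sub, norm_mul, norm_ofNat, mul_pow]
  rw [← normSq_eq_norm_sq, normSq_apply, sub_re, sub_im]
  ring

lemma norm_gradRho_sq (z : C2) :
    ‖gradRho z‖ ^ 2 = 4 * ((z 0).re ^ 2 + ‖z 1‖ ^ 2) + 16 * (z 0).im ^ 6 := by
  have gradRho_zero : gradRho 0 = 0 := by
    ext i; fin_cases i <;> simp [gradRho]
  simpa [gradRho_zero, ← pow_mul] using norm_gradRho_sub_sq z 0

/-- The Bregman divergence `ρ(z) - ρ(w) - ⟪∇ρ(w), z - w⟫` of `ρ` with base point `w`: the gap at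
`z` between `ρ` and its first-order Taylor polynomial at `w`. It links `Re Δ(w, z)`, for `w` and `z`
in `bD`, to the variation of `∇ρ`. -/
def bregmanRho (w z : C2) : ℝ := rho z - rho w - ⟪gradRho w, z - w⟫

lemma bregmanRho_eq (w z : C2) :
    bregmanRho w z = ((w 0).re - (z 0).re) ^ 2 + ‖w 1 - z 1‖ ^ 2 +
      ((z 0).im ^ 4 - (w 0).im ^ 4 - 4 * (w 0).im ^ 3 * ((z 0).im - (w 0).im)) := by
  simp only [bregmanRho, rho, inner_gradRho, PiLp.sub_apply, ← normSq_eq_norm_sq, normSq_apply,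
    sub_re, sub_im]
  ring

lemma bregmanRho_nonneg (w z : C2) : 0 ≤ bregmanRho w z := by
  rw [bregmanRho_eq]
  have := bregman_pow_four_nonneg (w 0).im (z 0).im
  positivity

lemma norm_gradRho_sub_sq_le_bregmanRho (w z : C2) :
    ‖gradRho w - gradRho z‖ ^ 2 ≤
      (4 + 48 * ((w 0).im ^ 2 + (z 0).im ^ 2)) * bregmanRho w z := by
  have cube_bound := sq_cube_sub_cube_le_bregman_pow_four (w 0).im (z 0).im
  have quartic_nonneg := bregman_pow_four_nonneg (w 0).im (z 0).im
  have cross_nonneg : 0 ≤ ((w 0).im ^ 2 + (z 0).im ^ 2) *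
      (((w 0).re - (z 0).re) ^ 2 + ‖w 1 - z 1‖ ^ 2) := by positivity
  rw [norm_gradRho_sub_sq, bregmanRho_eq]
  linarith

lemma Delta_re_eq_half_inner (w z : C2) : (Delta w z).re = ⟪gradRho w, w - z⟫ / 2 := by
  simp only [Delta, inner_gradRho, PiLp.sub_apply, ← ofReal_pow, add_re, mul_re, sub_re, sub_im,
    mul_im, conj_re, conj_im, ofReal_re, ofReal_im, I_re, I_im, re_ofNat, im_ofNat]
  ring

lemma Delta_re_add_smul_Nvec (w z : C2) (ε : ℝ) :
    (Delta w (z + ε • Nvec z)).re =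
      (Delta w z).re + ε / 2 * (‖gradRho z‖⁻¹ * ⟪gradRho w, gradRho z⟫) := by
  rw [Delta_re_eq_half_inner, Delta_re_eq_half_inner, ← sub_sub, inner_sub_right, Nvec,
    inner_smul_right, inner_smul_right]
  ring

lemma im_sq_le_one_of_mem_bD {z : C2} (hz : z ∈ bD) : (z 0).im ^ 2 ≤ 1 := by
  have hz_eq : ‖z 1‖ ^ 2 + (z 0).re ^ 2 + (z 0).im ^ 4 - 1 = 0 := hz
  nlinarith [sq_nonneg ‖z 1‖, sq_nonneg (z 0).re]

lemma one_le_norm_gradRho_of_mem_bD {z : C2} (hz : z ∈ bD) : 1 ≤ ‖gradRho z‖ := by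
  have hz_eq : ‖z 1‖ ^ 2 + (z 0).re ^ 2 + (z 0).im ^ 4 - 1 = 0 := hz
  have norm_sq_eq : ‖gradRho z‖ ^ 2 = 4 * (1 - (z 0).im ^ 4) + 16 * (z 0).im ^ 6 := by
    rw [norm_gradRho_sq]
    linarith
  have poly_nonneg : 0 ≤ (z 0).im ^ 2 * ((z 0).im ^ 2 - 1 / 8) ^ 2 := by positivity
  rw [← one_le_sq_iff₀ (norm_nonneg _), norm_sq_eq]
  nlinarith [im_sq_le_one_of_mem_bD hz]

lemma bregmanRho_eq_two_mul_Delta_re {w z : C2} (hw : w ∈ bD) (hz : z ∈ bD) :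
    bregmanRho w z = 2 * (Delta w z).re := by
  have hw_eq : rho w = 0 := hw
  have hz_eq : rho z = 0 := hz
  rw [bregmanRho, hw_eq, hz_eq, Delta_re_eq_half_inner, ← neg_sub w z, inner_neg_right]
  ring

lemma Delta_re_nonneg_of_mem_bD {w z : C2} (hw : w ∈ bD) (hz : z ∈ bD) :
    0 ≤ (Delta w z).re := by
  linarith [bregmanRho_nonneg w z, bregmanRho_eq_two_mul_Delta_re hw hz]

lemma norm_gradRho_sub_sq_le_Delta_re {w z : C2} (hw : w ∈ bD) (hz : z ∈ bD) :
    ‖gradRho w - gradRho z‖ ^ 2 ≤ 200 * (Delta w z).re := by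
  have factor_le : 4 + 48 * ((w 0).im ^ 2 + (z 0).im ^ 2) ≤ 100 := by
    linarith [im_sq_le_one_of_mem_bD hw, im_sq_le_one_of_mem_bD hz]
  calc ‖gradRho w - gradRho z‖ ^ 2
      ≤ (4 + 48 * ((w 0).im ^ 2 + (z 0).im ^ 2)) * bregmanRho w z :=
        norm_gradRho_sub_sq_le_bregmanRho w z
    _ ≤ 100 * bregmanRho w z := mul_le_mul_of_nonneg_right factor_le (bregmanRho_nonneg w z)
    _ = 200 * (Delta w z).re := by
        rw [bregmanRho_eq_two_mul_Delta_re hw hz]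
        ring

lemma inv_norm_mul_inner_gradRho_ge {w z : C2} (hw : w ∈ bD) (hz : z ∈ bD) :
    1 / 2 - 100 * (Delta w z).re ≤ ‖gradRho z‖⁻¹ * ⟪gradRho w, gradRho z⟫ := by
  have am_gm : ‖gradRho w - gradRho z‖ ≤ (1 + ‖gradRho w - gradRho z‖ ^ 2) / 2 := by
    linarith [sq_nonneg (‖gradRho w - gradRho z‖ - 1)]
  linarith [norm_sub_norm_sub_le_inv_norm_mul_inner (gradRho w) (gradRho z),
    one_le_norm_gradRho_of_mem_bD hz, norm_gradRho_sub_sq_le_Delta_re hw hz]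

/-- There exist `c₀ ∈ (0,1)` and `ε₀ > 0` such that for all `z, w ∈ bD` and `0 < ε < ε₀`:
`Re Δ(w, z+εN(z)) ≥ c₀(ε + Re Δ(w,z))`. -/
theorem stmt5 :
    ∃ c₀ ε₀ : ℝ, 0 < c₀ ∧ c₀ < 1 ∧ 0 < ε₀ ∧
      ∀ z ∈ bD, ∀ w ∈ bD, ∀ ε : ℝ, 0 < ε → ε < ε₀ →
        c₀ * (ε + (Delta w z).re) ≤ (Delta w (z + ε • Nvec z)).re := by
  refine ⟨1 / 4, 1 / 100, by norm_num, by norm_num, by norm_num, ?_⟩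
  intro z hz w hw ε hε_pos hε_lt
  have Delta_nonneg : 0 ≤ (Delta w z).re := Delta_re_nonneg_of_mem_bD hw hz
  have error_absorbed : ε * (Delta w z).re ≤ 1 / 100 * (Delta w z).re :=
    mul_le_mul_of_nonneg_right hε_lt.le Delta_nonneg
  calc 1 / 4 * (ε + (Delta w z).re)
      ≤ (Delta w z).re + ε / 2 * (1 / 2 - 100 * (Delta w z).re) := by linarith
    _ ≤ (Delta w z).re + ε / 2 * (‖gradRho z‖⁻¹ * ⟪gradRho w, gradRho z⟫) := by
        gcongr
        exact inv_norm_mul_inner_gradRho_ge hw hz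
    _ = (Delta w (z + ε • Nvec z)).re := (Delta_re_add_smul_Nvec w z ε).symm

end
end
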